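/- Let X = A_2 be embedded in Y = D_4 via the 28-dimensional irreducible (adjoint) representation of highest weight δ = ω_1 + ω_2 = (1,1). Let λ be a dominant weight for Y with λ ∉ {0, λ_1, λ_3, λ_4}. Then, up to a twist by an automorphism of D_4 (triality), V_Y(λ)↓X is multiplicity-free if and only if λ = λ_2, λ_1+λ_4, or cλ_1 with 1 ≤ c ≤ 5. -/

import Mathlib

/-!
# Common framework

Over an algebraically closed field of characteristic zero, finite–dimensional rational
representations of a simple algebraic group are semisimple and are determined by their
formal characters, i.e. by elements of the group ring of the (rational) weight lattice;
the character of the irreducible module of highest weight `λ` is pinned down by the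
Weyl character formula `A_ρ · χ_λ = A_{λ+ρ}`.

Below we model, completely combinatorially:

* type `A_r` : weights are realised by their traceless representatives in `Fin (r+1) → ℚ`
  (the `gl`-coordinates), and the Weyl group is the symmetric group;
* types `B_n, C_n, D_n` : weights are realised in the standard `ε`-coordinates
  `Fin n → ℚ`, and the Weyl group consists of (signed) permutations, with evenly many
  sign changes in type `D`;
* an embedding `X = A_r < Y` (classical of type `t` and rank `n`) in which `X` acts on
  the natural module `W` of `Y` irreducibly with highest weight `δ` : the weights of `W`
  are `± w i` (plus one zero weight in type `B`), and restriction of characters is induced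
  by the map `v ↦ ∑ i, v i • w i` of weight lattices;
* `IsMFRes t n r δ lam` : the restriction to `X` of the irreducible `Y`-module with
  highest weight `lam` is multiplicity-free, i.e. its character is a sum of distinct
  irreducible characters of `X`.

Dominant weights are always recorded by their (natural number) coordinates in the basis
of fundamental weights, `e n k` being the `k`-th fundamental weight (1-indexed).
-/

noncomputable section

namespace MFPaper

/-- The Dynkin type of a classical group `B_n = SO_{2n+1}`, `C_n = Sp_{2n}`, `D_n = SO_{2n}`. -/
inductive CType | B | C | D
deriving DecidableEq

/-- The character ring: the integral group ring of a rational weight space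
with `k` coordinates. -/
abbrev CharRing (k : ℕ) : Type := AddMonoidAlgebra ℤ (Fin k → ℚ)

/-- The formal exponential `e^v` of a weight `v`. -/
def mono {k : ℕ} (v : Fin k → ℚ) : CharRing k := AddMonoidAlgebra.single v 1

/-- `e n k` : the `k`-th fundamental dominant weight (`1 ≤ k ≤ n`, 1-indexed) of a rank `n`
group, recorded by its coordinates in the basis of fundamental weights. -/
def e (n k : ℕ) : Fin n → ℕ := fun i => if (i : ℕ) + 1 = k then 1 else 0

/-! ### Type `A_r` -/

/-- The partition (`gl`) lift of the dominant weight of `A_r` with coordinates `d`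
in the basis of fundamental weights. -/
def partLift (r : ℕ) (d : Fin r → ℕ) : Fin (r + 1) → ℚ := fun i =>
  ∑ j ∈ Finset.univ.filter (fun j : Fin r => (i : ℕ) ≤ (j : ℕ)), (d j : ℚ)

/-- The traceless (`sl`) representative of the dominant weight of `A_r` with coordinates `d`. -/
def slWt (r : ℕ) (d : Fin r → ℕ) : Fin (r + 1) → ℚ := fun i =>
  partLift r d i - (∑ j : Fin r, (((j : ℕ) : ℚ) + 1) * (d j : ℚ)) / (r + 1)

/-- A lift of the half-sum of the positive roots of `A_r`. -/
def rhoA (r : ℕ) : Fin (r + 1) → ℚ := fun i => (r : ℚ) - (i : ℕ)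

/-- The Weyl alternating sum `A_v = ∑_{σ} sgn(σ) e^{σ v}` for type `A_r`. -/
def altA (r : ℕ) (v : Fin (r + 1) → ℚ) : CharRing (r + 1) :=
  ∑ σ : Equiv.Perm (Fin (r + 1)),
    ((Equiv.Perm.sign σ : ℤˣ) : ℤ) • mono (fun i => v (σ i))

/-- `IsCharA r d f` : `f` is the formal character of the irreducible `A_r`-module
of highest weight `d` (Weyl character formula). -/
def IsCharA (r : ℕ) (d : Fin r → ℕ) (f : CharRing (r + 1)) : Prop :=
  altA r (rhoA r) * f = altA r (slWt r d + rhoA r)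

/-- `Decomp r F c` : the character `F` of a representation of `A_r` decomposes as
`∑_μ (c μ) · χ_μ`, i.e. the irreducible of highest weight `μ` occurs in it as a
composition factor with multiplicity `c μ`. -/
def Decomp (r : ℕ) (F : CharRing (r + 1)) (c : (Fin r → ℕ) →₀ ℕ) : Prop :=
  F * altA r (rhoA r) = c.sum fun μ k => (k : ℤ) • altA r (slWt r μ + rhoA r)

/-- The Weyl dimension formula for type `A_r`. -/
def dimA (r : ℕ) (d : Fin r → ℕ) : ℚ :=
  ∏ p ∈ Finset.univ.filter (fun p : Fin (r + 1) × Fin (r + 1) => (p.1 : ℕ) < (p.2 : ℕ)),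
    ((partLift r d p.1 - partLift r d p.2 + ((p.2 : ℕ) : ℚ) - ((p.1 : ℕ) : ℚ)) /
      (((p.2 : ℕ) : ℚ) - ((p.1 : ℕ) : ℚ)))

/-- The self-dual irreducible `A_r`-module of highest weight `d` is *symplectic*
(it carries an invariant alternating form); by Steinberg's criterion this happens
exactly when `⟨d, 2ρ^∨⟩ = ∑ d_k · k(r+1-k)` is odd. -/
def IsSympWt (r : ℕ) (d : Fin r → ℕ) : Prop :=
  Odd (∑ i : Fin r, d i * ((i : ℕ) + 1) * (r - (i : ℕ)))

/-! ### The classical types `B`, `C`, `D` -/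

/-- Convenient access to the `k`-th (0-indexed) coordinate. -/
def cval {n : ℕ} (c : Fin n → ℕ) (k : ℕ) : ℚ := if h : k < n then (c ⟨k, h⟩ : ℚ) else 0

/-- `ε`-coordinates of the dominant weight of the classical group of type `t` and rank `n`
with coordinates `c` in the basis of fundamental weights (Bourbaki numbering). -/
def epsWt (t : CType) (n : ℕ) (c : Fin n → ℕ) : Fin n → ℚ := fun i =>
  (∑ k ∈ Finset.univ.filter (fun k : Fin n => (i : ℕ) ≤ (k : ℕ)), (c k : ℚ)) -
    (match t with
      | .C => 0
      | .B => cval c (n - 1) / 2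
      | .D => (cval c (n - 2) + cval c (n - 1)) / 2)

/-- The half-sum of the positive roots in `ε`-coordinates. -/
def rhoY (t : CType) (n : ℕ) : Fin n → ℚ := fun i =>
  match t with
  | .C => (n : ℚ) - (i : ℕ)
  | .B => (n : ℚ) - (i : ℕ) - 1 / 2
  | .D => (n : ℚ) - 1 - (i : ℕ)

/-- The Weyl alternating sum for the classical group of type `t` and rank `n`:
the Weyl group consists of the signed permutations of the coordinates,
with evenly many sign changes in type `D`. -/
def altY (t : CType) (n : ℕ) (v : Fin n → ℚ) : CharRing n :=
  ∑ σ : Equiv.Perm (Fin n), ∑ s : Fin n → Bool,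
    if t = CType.D ∧ ¬ Even (Finset.univ.filter (fun i => s i = true)).card then 0
    else (((Equiv.Perm.sign σ : ℤˣ) : ℤ) *
          (-1) ^ (Finset.univ.filter (fun i => s i = true)).card) •
      mono (fun i => (if s i then -1 else 1) * v (σ i))

/-- `IsCharY t n c f` : `f` is the formal character of the irreducible module of highest
weight `c` for the classical group of type `t` and rank `n` (Weyl character formula). -/
def IsCharY (t : CType) (n : ℕ) (c : Fin n → ℕ) (f : CharRing n) : Prop :=
  altY t n (rhoY t n) * f = altY t n (epsWt t n c + rhoY t n)

/-! ### The embedding `X = A_r < Y` via `δ`, and restriction of characters -/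

/-- `WtSys t n r δ w` : `w` lists "half" of the weights of the natural module
`W = V_X(δ)` of the classical group `Y` of type `t` and rank `n`, for `X = A_r`:
the weights of `W` (with multiplicity) are exactly the `± w i`, together with one
extra zero weight in type `B`.  Such a `w` records a maximal torus embedding
`T_X → T_Y` realising the irreducible embedding `X < Y = SO(W)` or `Sp(W)` given
by the representation of highest weight `δ`. -/
def WtSys (t : CType) (n r : ℕ) (δ : Fin r → ℕ)
    (w : Fin n → (Fin (r + 1) → ℚ)) : Prop :=
  ((∑ i : Fin n, (mono (w i) + mono (-(w i)))) +
      (if t = CType.B then mono (0 : Fin (r + 1) → ℚ) else 0)) * altA r (rhoA r)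
    = altA r (slWt r δ + rhoA r)

/-- Restriction of characters from `Y` to `X = A_r` along the torus embedding
recorded by `w`. -/
def resChar {n r : ℕ} (w : Fin n → (Fin (r + 1) → ℚ)) (F : CharRing n) :
    CharRing (r + 1) :=
  AddMonoidAlgebra.mapDomain (fun v : Fin n → ℚ => ∑ i : Fin n, v i • w i) F

/-- `IsMFRes t n r δ lam` : in the embedding `X = A_r < Y` (the classical group of type
`t` and rank `n`) given by the irreducible representation of highest weight `δ`, the
restriction to `X` of the irreducible `Y`-module of highest weight `lam` is
multiplicity-free: its character is a sum of *distinct* irreducible characters of `X`. -/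
def IsMFRes (t : CType) (n r : ℕ) (δ : Fin r → ℕ) (lam : Fin n → ℕ) : Prop :=
  ∀ w, WtSys t n r δ w → ∀ f, IsCharY t n lam f →
    ∃ c : (Fin r → ℕ) →₀ ℕ, Decomp r (resChar w f) c ∧ ∀ μ, c μ ≤ 1

/-- The operation `e^v ↦ e^{k·v}` on characters (Adams operation on the torus),
used to express symmetric and exterior powers of characters. -/
def pw {m : ℕ} (k : ℕ) (F : CharRing m) : CharRing m :=
  AddMonoidAlgebra.mapDomain (fun v : Fin m → ℚ => (k : ℚ) • v) F

/-- The irreducible `A_r`-module of highest weight `d` carries a nonzero invariant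
*symmetric* bilinear form, i.e. the trivial module occurs in its symmetric square
(whose character `S` satisfies `2S = f² + f^{[2]}`). -/
def HasSymForm (r : ℕ) (d : Fin r → ℕ) : Prop :=
  ∀ f, IsCharA r d f →
    ∃ c : (Fin r → ℕ) →₀ ℕ,
      (f * f + pw 2 f) * altA r (rhoA r)
          = c.sum (fun μ k => ((2 * k : ℕ) : ℤ) • altA r (slWt r μ + rhoA r)) ∧ 1 ≤ c 0

/-- The irreducible `A_r`-module of highest weight `d` carries a nonzero invariant
*alternating* bilinear form, i.e. the trivial module occurs in its exterior square
(whose character `Λ` satisfies `2Λ = f² - f^{[2]}`). -/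
def HasAltForm (r : ℕ) (d : Fin r → ℕ) : Prop :=
  ∀ f, IsCharA r d f →
    ∃ c : (Fin r → ℕ) →₀ ℕ,
      (f * f - pw 2 f) * altA r (rhoA r)
          = c.sum (fun μ k => ((2 * k : ℕ) : ℤ) • altA r (slWt r μ + rhoA r)) ∧ 1 ≤ c 0

end MFPaper

open MFPaper

/-!
Fix half of the weights of the adjoint module of `A₂`; one of them is `0`. Any other choice differs
from this one by a signed permutation, and because of the zero weight the sign changes have no
effect on the restricted alternating sums of type `D`, so the restriction of a character does not
depend on the choice.

Dividing the restriction of the Weyl character formula of `D₄` by the part of the denominator that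
comes from `A₂` writes the multiplicity of each composition factor as a signed sum, over the Weyl
group of `D₄`, of values of the partition function of the nine remaining restricted roots. At depth
at most `N` below the top weight this sum only sees the coordinates of the highest weight truncated
at `N`, so finitely many evaluations of multiplicities `≥ 2` exclude all but finitely many highest
weights, and these are then checked one by one.

Irreducible characters of `D_n` exist because twice an alternating sum of type `D` is a sum of two
determinants, each divisible by the Vandermonde determinant in the `x_c + x_c⁻¹`, while `2` is a
prime of the character ring that does not divide this Vandermonde determinant.
-/

namespace MFPaper

open Finset Equiv

section CharRing

variable {k : ℕ}

lemma mono_add (u v : Fin k → ℚ) : mono (u + v) = mono u * mono v := by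
  simp [mono, AddMonoidAlgebra.single_mul_single]

lemma mono_zero : mono (0 : Fin k → ℚ) = 1 := rfl

lemma mono_ne_zero (v : Fin k → ℚ) : mono v ≠ 0 :=
  AddMonoidAlgebra.single_ne_zero.2 one_ne_zero

lemma coeff_mono (u v : Fin k → ℚ) : (mono u).coeff v = if u = v then 1 else 0 := by
  rw [mono, AddMonoidAlgebra.coeff_single, Finsupp.single_apply]

lemma coeff_mul_mono (f : CharRing k) (u v : Fin k → ℚ) :
    (f * mono u).coeff v = f.coeff (v - u) := by
  rw [mono, AddMonoidAlgebra.coeff_mul_single_apply, mul_one, sub_eq_add_neg]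

lemma prod_mono {ι : Type*} (s : Finset ι) (u : ι → Fin k → ℚ) :
    ∏ i ∈ s, mono (u i) = mono (∑ i ∈ s, u i) := by
  simp only [mono, AddMonoidAlgebra.prod_single, prod_const_one]

lemma prod_mono_single (v : Fin k → ℚ) : ∏ i, mono (Pi.single i (v i)) = mono v := by
  rw [prod_mono, univ_sum_single]

/-- Reduction of the coefficients modulo `p`; its target is a domain when `p` is prime. -/
def reduceMod (k p : ℕ) : CharRing k →+* AddMonoidAlgebra (ZMod p) (Fin k → ℚ) :=
  AddMonoidAlgebra.mapRingHom _ (Int.castRingHom (ZMod p))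

lemma coeff_reduceMod (p : ℕ) (f : CharRing k) (v : Fin k → ℚ) :
    (reduceMod k p f).coeff v = (f.coeff v : ZMod p) := by
  simp [reduceMod]

lemma reduceMod_eq_zero_iff {p : ℕ} {f : CharRing k} :
    reduceMod k p f = 0 ↔ (p : CharRing k) ∣ f := by
  constructor
  · intro h
    refine ⟨.ofCoeff (f.coeff.mapRange (· / (p : ℤ)) (Int.zero_ediv _)), ?_⟩
    ext v
    have hv : (p : ℤ) ∣ f.coeff v := by
      rw [← ZMod.intCast_zmod_eq_zero_iff_dvd, ← coeff_reduceMod, h]; rfl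
    rw [← nsmul_eq_mul, AddMonoidAlgebra.coeff_smul_apply, AddMonoidAlgebra.coeff_ofCoeff,
      Finsupp.mapRange_apply, nsmul_eq_mul, Int.mul_ediv_cancel' hv]
  · rintro ⟨g, rfl⟩
    ext v
    rw [← nsmul_eq_mul, coeff_reduceMod, AddMonoidAlgebra.coeff_smul_apply]
    simp

lemma prime_natCast (k : ℕ) {p : ℕ} (hp : p.Prime) : Prime (p : CharRing k) := by
  have : Fact p.Prime := ⟨hp⟩
  have hcoeff (f : CharRing k) : (p : CharRing k) ∣ f ↔ reduceMod k p f = 0 :=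
    reduceMod_eq_zero_iff.symm
  refine ⟨?_, ?_, fun f g => ?_⟩
  · rw [← nsmul_one]
    exact smul_ne_zero hp.ne_zero one_ne_zero
  · rw [isUnit_iff_dvd_one, hcoeff, map_one]
    exact one_ne_zero
  · simp only [hcoeff, map_mul, mul_eq_zero, imp_self]

lemma dvd_coeff_of_natCast_dvd {p : ℕ} {f : CharRing k} (h : (p : CharRing k) ∣ f)
    (v : Fin k → ℚ) : (p : ℤ) ∣ f.coeff v := by
  rw [← ZMod.intCast_zmod_eq_zero_iff_dvd, ← coeff_reduceMod, reduceMod_eq_zero_iff.2 h]; rfl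

end CharRing

/-! ### Existence of the irreducible characters of `D_n` -/

section TypeD

open Polynomial

variable {R : Type*} [CommRing R] {n : ℕ}

lemma eq_chebyshevS_of_recurrence {g : ℤ → R} {y : R}
    (hg : ∀ m, g (m + 1) = y * g m - g (m - 1)) (m : ℤ) :
    g m = (Chebyshev.S R m).eval y * g 0 - (Chebyshev.S R (m - 1)).eval y * g (-1) := by
  set f : ℤ → R := fun m =>
    (Chebyshev.S R m).eval y * g 0 - (Chebyshev.S R (m - 1)).eval y * g (-1) with hf_def
  have hf (m : ℤ) : f (m + 1) = y * f m - f (m - 1) := by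
    have h := Chebyshev.S_add_one R (m - 1)
    rw [sub_add_cancel] at h
    simp only [hf_def, Chebyshev.S_add_one R m, add_sub_cancel_right, h, eval_sub, eval_mul, eval_X]
    ring
  change g m = f m
  induction m using Chebyshev.induct with
  | zero => simp [hf_def]
  | one => simpa [hf_def] using hg 0
  | add_two m ih₁ ih₀ =>
    have hg' := hg (m + 1)
    have hf' := hf (m + 1)
    rw [add_sub_cancel_right, add_assoc, one_add_one_eq_two] at hg' hf'
    rw [hg', hf', ih₁, ih₀]
  | neg_add_one m ih₀ ih₁ =>
    linear_combination hg (-m) - hf (-m) + y * ih₀ - ih₁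

lemma natDegree_chebyshevC_le (n : ℕ) : (Chebyshev.C R n).natDegree ≤ n := by
  induction n using Nat.twoStepInduction with
  | zero => simp
  | one => simpa using natDegree_X_le
  | more n h₀ h₁ =>
    push_cast at h₁ ⊢
    rw [Chebyshev.C_add_two]
    exact natDegree_sub_le_of_le (m := n + 2) (n := n + 2)
      ((natDegree_mul_le_of_le natDegree_X_le h₁).trans (by omega)) (h₀.trans (by omega))
        |>.trans (by simp)

lemma coeff_chebyshevC_self (n : ℕ) : (Chebyshev.C R n).coeff n = if n = 0 then 2 else 1 := by
  induction n using Nat.twoStepInduction with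
  | zero => simp
  | one => simp
  | more n _ h₁ =>
    push_cast at h₁ ⊢
    rw [Chebyshev.C_add_two, coeff_sub, coeff_X_mul, h₁,
      coeff_eq_zero_of_natDegree_lt ((natDegree_chebyshevC_le n).trans_lt (by omega))]
    simp

lemma det_vandermonde_dvd_det_eval (y : Fin n → R) (p : Fin n → R[X]) :
    (Matrix.vandermonde y).det ∣ (Matrix.of fun i j => (p j).eval (y i)).det := by
  nontriviality R
  set m : R[X] := ∏ i, (X - C (y i)) with hm
  have hmonic : m.Monic := monic_prod_X_sub_C y univ
  have hdeg : m.natDegree = n := by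
    simp [hm, natDegree_prod_of_monic _ _ fun i _ => monic_X_sub_C (y i)]
  suffices h : (Matrix.of fun i j => (p j).eval (y i)) =
      Matrix.vandermonde y * Matrix.of fun k j : Fin n => (p j %ₘ m).coeff k by
    rw [h, Matrix.det_mul]; exact dvd_mul_right _ _
  ext i j
  have hroot : IsRoot m (y i) := by
    rw [IsRoot, hm, eval_prod]; exact prod_eq_zero (mem_univ i) (by simp)
  have hne : m ≠ 1 := fun h => i.pos.ne' (by rw [← hdeg, h, natDegree_one])
  have hlt : (p j %ₘ m).natDegree < n := (natDegree_modByMonic_lt _ hmonic hne).trans_eq hdeg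
  have heval : (p j %ₘ m).eval (y i) = (p j).eval (y i) :=
    eval₂_modByMonic_eq_self_of_root hroot
  rw [Matrix.of_apply, ← heval, eval_eq_sum_range' hlt, sum_range, Matrix.mul_apply]
  exact sum_congr rfl fun k _ => mul_comm _ _

/-- The element `x_c ^ t + z x_c ^ (-t)` of the character ring, where `x_c = e^{ε_c}`. -/
def monoPair (z : ℤ) (c : Fin n) (t : ℚ) : CharRing n :=
  mono (Pi.single c t) + z • mono (Pi.single c (-t))

/-- The matrix of entries `x_c ^ v_r + z x_c ^ (-v_r)`. Its determinants at `z = 1` and `z = -1`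
add up to twice the Weyl alternating sum of type `D`. -/
def weylMatrix (z : ℤ) (v : Fin n → ℚ) : Matrix (Fin n) (Fin n) (CharRing n) :=
  .of fun r c => monoPair z c (v r)

/-- The element `x_c + x_c⁻¹` of the character ring, where `x_c = e^{ε_c}`. -/
def addInv (c : Fin n) : CharRing n := mono (Pi.single c 1) + mono (Pi.single c (-1))

lemma prod_weylMatrix (z : ℤ) (v : Fin n → ℚ) (σ : Perm (Fin n)) :
    ∏ i, weylMatrix z v (σ i) i = ∑ s : Fin n → Bool, z ^ #{i | s i = true} •
      mono (fun i => (if s i then -1 else 1) * v (σ i)) := by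
  have hentry (i : Fin n) : weylMatrix z v (σ i) i = ∑ b : Bool, (if b then z else 1) •
      mono (Pi.single i ((if b then -1 else 1) * v (σ i))) := by
    simp [weylMatrix, monoPair, add_comm]
  simp_rw [hentry, Fintype.prod_sum, zsmul_eq_mul, prod_mul_distrib,
    prod_mono_single fun i => _ * v (σ i), ← Int.cast_prod, prod_ite, prod_const, one_pow, mul_one]

lemma two_mul_altY (v : Fin n → ℚ) :
    2 * altY .D n v = (weylMatrix 1 v).det + (weylMatrix (-1) v).det := by
  simp_rw [Matrix.det_apply, prod_weylMatrix, altY, smul_sum, ← sum_add_distrib, mul_sum]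
  refine sum_congr rfl fun σ _ => sum_congr rfl fun s _ => ?_
  rw [Units.smul_def, Units.smul_def, smul_smul, smul_smul]
  by_cases h : Even #{i | s i = true}
  · simp [h, h.neg_one_pow, two_mul]
  · simp [h, (Nat.not_even_iff_odd.1 h).neg_one_pow]

lemma addInv_mul_mono (c : Fin n) (t : ℚ) :
    addInv c * mono (Pi.single c t) =
      mono (Pi.single c (t + 1)) + mono (Pi.single c (t - 1)) := by
  rw [addInv, add_mul, ← mono_add, ← mono_add, ← Pi.single_add, ← Pi.single_add, add_comm 1,
    neg_add_eq_sub]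

lemma addInv_mul_monoPair (z : ℤ) (c : Fin n) (t : ℚ) :
    addInv c * monoPair z c t = monoPair z c (t + 1) + monoPair z c (t - 1) := by
  simp only [monoPair, mul_add, mul_smul_comm, addInv_mul_mono, smul_add, neg_add_eq_sub, neg_sub,
    neg_add']
  ring_nf

lemma monoPair_add_intCast (z : ℤ) (c : Fin n) (t : ℚ) (m : ℤ) :
    monoPair z c (t + m) = (Chebyshev.S _ m).eval (addInv c) * monoPair z c t -
      (Chebyshev.S _ (m - 1)).eval (addInv c) * monoPair z c (t - 1) := by
  have hrec (m : ℤ) : monoPair z c (t + (m + 1 : ℤ)) =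
      addInv c * monoPair z c (t + m) - monoPair z c (t + (m - 1 : ℤ)) := by
    rw [addInv_mul_monoPair]
    push_cast
    rw [← add_assoc, ← add_sub_assoc t, add_sub_cancel_right]
  simpa [sub_eq_add_neg] using
    eq_chebyshevS_of_recurrence (g := fun m => monoPair z c (t + m)) hrec m

lemma exists_monoPair_eq_mul_eval {z : ℤ} (hz : z = 1 ∨ z = -1) {t : ℚ}
    (ht : t = 0 ∨ t = 1 / 2) :
    ∃ (h : Fin n → CharRing n) (p : ℤ → (CharRing n)[X]), ∀ (m : ℤ) c,
      monoPair z c (t + m) = h c * (p m).eval (addInv c) := by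
  simp_rw [monoPair_add_intCast]
  rcases ht with rfl | rfl
  · rcases hz with rfl | rfl
    · refine ⟨1, fun m => 2 * Chebyshev.S _ m - X * Chebyshev.S _ (m - 1), fun m c => ?_⟩
      simp only [addInv, monoPair, Pi.single_zero, mono_zero, neg_zero, one_smul, zero_sub, neg_neg,
        Pi.one_apply, eval_sub, eval_mul, eval_ofNat, eval_X, one_mul]
      ring
    · refine ⟨fun c => mono (Pi.single c 1) - mono (Pi.single c (-1)),
        fun m => Chebyshev.S _ (m - 1), fun m c => ?_⟩
      simp only [monoPair, Pi.single_zero, neg_zero, neg_smul, one_smul, add_neg_cancel, mul_zero,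
        zero_sub, neg_neg]
      ring
  · refine ⟨fun c => monoPair z c (1 / 2),
      fun m => Chebyshev.S _ m - (z : (CharRing n)[X]) * Chebyshev.S _ (m - 1), fun m c => ?_⟩
    have hreflect : monoPair z c (1 / 2 - 1) = z * monoPair z c (1 / 2) := by
      rcases hz with rfl | rfl <;> norm_num [monoPair, add_comm]
    simp only [hreflect, eval_sub, eval_mul, eval_intCast]
    ring

lemma det_vandermonde_dvd_det_weylMatrix {z : ℤ} (hz : z = 1 ∨ z = -1) {t : ℚ}
    (ht : t = 0 ∨ t = 1 / 2) (m : Fin n → ℤ) :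
    (Matrix.vandermonde addInv).det ∣ (weylMatrix z fun r => t + m r).det := by
  obtain ⟨h, p, hp⟩ := exists_monoPair_eq_mul_eval (n := n) hz ht
  have hfactor : weylMatrix z (fun r => t + m r) =
      (Matrix.of fun c r => (p (m r)).eval (addInv c)).transpose * Matrix.diagonal h := by
    ext1 r c
    rw [Matrix.mul_diagonal, mul_comm]
    exact hp (m r) c
  rw [hfactor, Matrix.det_mul, Matrix.det_transpose]
  exact (det_vandermonde_dvd_det_eval _ _).mul_right _

lemma monoPair_one_natCast (c : Fin n) (m : ℕ) :
    monoPair 1 c m = (Chebyshev.C (CharRing n) m).eval (addInv c) := by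
  have h := monoPair_add_intCast 1 c 0 m
  rw [zero_add, Int.cast_natCast] at h
  rw [h, Chebyshev.C_eq_S_sub_X_mul_S]
  simp only [addInv, monoPair, Pi.single_zero, mono_zero, neg_zero, one_smul, zero_sub, neg_neg,
    eval_sub, eval_mul, eval_ofNat, eval_X]
  ring

lemma det_weylMatrix_one_rhoY (n : ℕ) :
    (weylMatrix 1 (rhoY .D (n + 1))).det = 2 * (Matrix.vandermonde (addInv ∘ Fin.rev)).det := by
  have hrev : ((weylMatrix 1 (rhoY .D (n + 1))).submatrix Fin.revPerm Fin.revPerm).transpose =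
      .of fun i j : Fin (n + 1) => (Chebyshev.C _ (j : ℤ)).eval (addInv (Fin.rev i)) := by
    ext1 i j
    simp only [weylMatrix, Matrix.transpose_apply, Matrix.submatrix_apply, Matrix.of_apply,
      Fin.revPerm_apply, rhoY, Fin.val_rev, ← monoPair_one_natCast]
    congr 1
    rw [Nat.cast_sub (by omega)]
    push_cast
    ring
  rw [← Matrix.det_submatrix_equiv_self Fin.revPerm, ← Matrix.det_transpose, hrev,
    Matrix.eval_matrixOfPolynomials_eq_vandermonde_mul_matrixOfPolynomials _ _
      fun j => natDegree_chebyshevC_le _, Matrix.det_mul, mul_comm]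
  congr 1
  rw [Matrix.det_of_isUpperTriangular]
  · simp [coeff_chebyshevC_self]
  · intro i j hij
    exact coeff_eq_zero_of_natDegree_lt ((natDegree_chebyshevC_le _).trans_lt hij)

lemma det_weylMatrix_neg_one_rhoY (n : ℕ) : (weylMatrix (-1) (rhoY .D (n + 1))).det = 0 :=
  Matrix.det_eq_zero_of_row_eq_zero (Fin.last n) fun c => by
    simp [weylMatrix, monoPair, rhoY]

lemma altY_rhoY (n : ℕ) :
    altY .D (n + 1) (rhoY .D (n + 1)) = (Matrix.vandermonde (addInv ∘ Fin.rev)).det := by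
  have h := two_mul_altY (rhoY .D (n + 1))
  rw [det_weylMatrix_one_rhoY, det_weylMatrix_neg_one_rhoY, add_zero] at h
  exact mul_left_cancel₀ (prime_natCast (n + 1) Nat.prime_two).ne_zero h

lemma altY_rhoY_dvd_det_vandermonde_addInv (n : ℕ) :
    altY .D (n + 1) (rhoY .D (n + 1)) ∣ (Matrix.vandermonde addInv).det := by
  have h : Matrix.vandermonde (addInv ∘ Fin.rev) =
      (Matrix.vandermonde (addInv (n := n + 1))).submatrix Fin.revPerm id := rfl
  rw [altY_rhoY, h, Matrix.det_permute]
  rcases Int.units_eq_one_or (Perm.sign (Fin.revPerm (n := n + 1))) with hs | hs <;> simp [hs]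

lemma not_two_dvd_det_vandermonde_addInv (n : ℕ) :
    ¬ (2 : CharRing n) ∣ (Matrix.vandermonde addInv).det := by
  have h2 : Prime (2 : CharRing n) := prime_natCast n Nat.prime_two
  simp only [Matrix.det_vandermonde, h2.dvd_finsetProd_iff, not_exists, not_and]
  intro i _ j hj hdvd
  have hij : i ≠ j := (mem_Ioi.1 hj).ne
  have hneg : (Pi.single j (-1) : Fin n → ℚ) ≠ Pi.single j 1 := by norm_num
  have hne (t : ℚ) : (Pi.single i t : Fin n → ℚ) ≠ Pi.single j 1 := fun h => by
    simpa [hij.symm] using congrFun h j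
  have h := dvd_coeff_of_natCast_dvd (p := 2) hdvd (Pi.single j 1)
  norm_num [addInv, coeff_mono, hneg, hne] at h

lemma altY_rhoY_dvd_altY {t : ℚ} (ht : t = 0 ∨ t = 1 / 2) (m : Fin (n + 1) → ℤ) :
    altY .D (n + 1) (rhoY .D (n + 1)) ∣ altY .D (n + 1) (fun i => t + m i) := by
  refine (altY_rhoY_dvd_det_vandermonde_addInv n).trans ?_
  obtain ⟨g, hg⟩ : (Matrix.vandermonde addInv).det ∣ 2 * altY .D (n + 1) (fun i => t + m i) := by
    rw [two_mul_altY]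
    exact dvd_add (det_vandermonde_dvd_det_weylMatrix (.inl rfl) ht m)
      (det_vandermonde_dvd_det_weylMatrix (.inr rfl) ht m)
  have h2 : Prime (2 : CharRing (n + 1)) := prime_natCast (n + 1) Nat.prime_two
  obtain ⟨g', rfl⟩ : 2 ∣ g := (h2.dvd_or_dvd ⟨_, hg.symm⟩).resolve_left
    (not_two_dvd_det_vandermonde_addInv _)
  exact ⟨g', mul_left_cancel₀ h2.ne_zero (hg.trans (mul_left_comm _ _ _))⟩

lemma exists_epsWt_add_rhoY_eq (c : Fin (n + 1) → ℕ) : ∃ t : ℚ, (t = 0 ∨ t = 1 / 2) ∧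
    ∃ m : Fin (n + 1) → ℤ, epsWt .D (n + 1) c + rhoY .D (n + 1) = fun i => t + m i := by
  obtain ⟨N, hN⟩ : ∃ N : ℕ, cval c (n + 1 - 2) + cval c (n + 1 - 1) = N :=
    ⟨c ⟨n + 1 - 2, by omega⟩ + c ⟨n + 1 - 1, by omega⟩, by simp [cval]⟩
  obtain ⟨m, hm⟩ : ∃ m : Fin (n + 1) → ℤ,
      ∀ i, (epsWt .D (n + 1) c + rhoY .D (n + 1)) i = m i - (N : ℚ) / 2 := by
    refine ⟨fun i =>
      ∑ k ∈ univ.filter fun k : Fin (n + 1) => (i : ℕ) ≤ k, (c k : ℤ) + (n - (i : ℕ)),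
      fun i => ?_⟩
    simp only [Pi.add_apply, epsWt, hN, rhoY]
    push_cast
    ring
  rcases N.even_or_odd' with ⟨l, rfl | rfl⟩
  · exact ⟨0, .inl rfl, fun i => m i - l, funext fun i => by rw [hm]; push_cast; ring⟩
  · exact ⟨1 / 2, .inr rfl, fun i => m i - (l + 1), funext fun i => by rw [hm]; push_cast; ring⟩

theorem exists_isCharY_D (c : Fin (n + 1) → ℕ) : ∃ f, IsCharY .D (n + 1) c f := by
  obtain ⟨t, ht, m, hm⟩ := exists_epsWt_add_rhoY_eq c
  obtain ⟨f, hf⟩ := altY_rhoY_dvd_altY ht m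
  exact ⟨f, by rw [IsCharY, hm, hf]⟩

end TypeD

/-! ### Independence of the torus embedding -/

section Restriction

variable {k n r : ℕ}

/-- Restriction of characters along the torus embedding recorded by `w`, as a ring homomorphism;
`resChar w` is its special case `k = r + 1`. -/
def resHom (w : Fin n → Fin k → ℚ) : CharRing n →+* CharRing k :=
  AddMonoidAlgebra.mapDomainRingHom ℤ (Fintype.linearCombination ℚ w).toAddMonoidHom

lemma resChar_eq_resHom (w : Fin n → Fin (r + 1) → ℚ) (f : CharRing n) :
    resChar w f = resHom w f := rfl

lemma resHom_mono (w : Fin n → Fin k → ℚ) (v : Fin n → ℚ) :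
    resHom w (mono v) = mono (∑ i, v i • w i) :=
  AddMonoidAlgebra.mapDomain_single

lemma resHom_mono_single (w : Fin n → Fin k → ℚ) (i : Fin n) (t : ℚ) :
    resHom w (mono (Pi.single i t)) = mono (t • w i) := by
  rw [resHom_mono, Fintype.sum_eq_single i (by simp +contextual), Pi.single_eq_same]

lemma resHom_monoPair (w : Fin n → Fin k → ℚ) (z : ℤ) (i : Fin n) (t : ℚ) :
    resHom w (monoPair z i t) = mono (t • w i) + z • mono (-(t • w i)) := by
  rw [monoPair, map_add, map_zsmul, resHom_mono_single, resHom_mono_single, neg_smul]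

lemma resHom_altY_rhoY (w : Fin (n + 1) → Fin k → ℚ) :
    resHom w (altY .D (n + 1) (rhoY .D (n + 1))) =
      (Matrix.vandermonde fun i => mono (w (Fin.rev i)) + mono (-w (Fin.rev i))).det := by
  rw [altY_rhoY, RingHom.map_det]
  congr 1
  ext1 i j
  rw [RingHom.mapMatrix_apply, Matrix.map_apply, Matrix.vandermonde_apply, map_pow,
    Function.comp_apply, addInv, map_add, resHom_mono_single, resHom_mono_single, one_smul,
    neg_smul, one_smul, Matrix.vandermonde_apply]

lemma det_map_weylMatrix_neg_one {w : Fin n → Fin k → ℚ} (hw : ∃ i, w i = 0) (v : Fin n → ℚ) :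
    ((weylMatrix (-1) v).map (resHom w)).det = 0 := by
  obtain ⟨i, hi⟩ := hw
  exact Matrix.det_eq_zero_of_column_eq_zero i fun j => by
    simp [weylMatrix, resHom_monoPair, hi]

lemma two_mul_resHom_altY {w : Fin n → Fin k → ℚ} (hw : ∃ i, w i = 0) (v : Fin n → ℚ) :
    2 * resHom w (altY .D n v) = ((weylMatrix 1 v).map (resHom w)).det := by
  rw [← map_ofNat (resHom w), ← map_mul, two_mul_altY, map_add, RingHom.map_det, RingHom.map_det,
    RingHom.mapMatrix_apply, RingHom.mapMatrix_apply, det_map_weylMatrix_neg_one hw, add_zero]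

lemma resHom_altY_of_eq_or_eq_neg {w w' : Fin n → Fin k → ℚ} {κ : Perm (Fin n)}
    (hκ : ∀ i, w i = w' (κ i) ∨ w i = -w' (κ i)) (hw' : ∃ i, w' i = 0) (v : Fin n → ℚ) :
    resHom w (altY .D n v) = (Perm.sign κ : ℤ) * resHom w' (altY .D n v) := by
  have hw : ∃ i, w i = 0 := by
    obtain ⟨j, hj⟩ := hw'
    exact ⟨κ.symm j, by simpa [hj] using hκ (κ.symm j)⟩
  have hperm : (weylMatrix 1 v).map (resHom w) =
      ((weylMatrix 1 v).map (resHom w')).submatrix id κ := by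
    ext1 i j
    rcases hκ j with h | h <;> simp [weylMatrix, resHom_monoPair, h, add_comm]
  refine mul_left_cancel₀ (prime_natCast k Nat.prime_two).ne_zero ?_
  rw [Nat.cast_ofNat, two_mul_resHom_altY hw, hperm, Matrix.det_permute', mul_left_comm,
    two_mul_resHom_altY hw']

lemma resHom_eq_of_eq_or_eq_neg {w w' : Fin n → Fin k → ℚ} {κ : Perm (Fin n)}
    (hκ : ∀ i, w i = w' (κ i) ∨ w i = -w' (κ i)) (hw' : ∃ i, w' i = 0)
    (hρ : resHom w' (altY .D n (rhoY .D n)) ≠ 0) {c : Fin n → ℕ} {f : CharRing n}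
    (hf : IsCharY .D n c f) : resHom w f = resHom w' f := by
  have h := congrArg (resHom w) hf
  rw [map_mul, resHom_altY_of_eq_or_eq_neg hκ hw', resHom_altY_of_eq_or_eq_neg hκ hw', ← hf,
    map_mul, mul_assoc] at h
  have hsign : ((Perm.sign κ : ℤ) : CharRing k) ≠ 0 := by
    rcases Int.units_eq_one_or (Perm.sign κ) with hs | hs <;> simp [hs]
  exact mul_left_cancel₀ hρ (mul_left_cancel₀ hsign h)

lemma card_filter_eq_of_sum_mono_eq {w w' : Fin n → Fin k → ℚ}
    (h : ∑ i, (mono (w i) + mono (-w i)) = ∑ i, (mono (w' i) + mono (-w' i))) (u : Fin k → ℚ) :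
    #{i | w i = u ∨ w i = -u} = #{i | w' i = u ∨ w' i = -u} := by
  have hcoeff (w : Fin n → Fin k → ℚ) : (∑ i, (mono (w i) + mono (-w i))).coeff u =
      #{i | w i = u ∨ w i = -u} * if u = 0 then 2 else 1 := by
    rw [AddMonoidAlgebra.coeff_sum, Finsupp.finsetSum_apply, card_filter, Nat.cast_sum, sum_mul]
    refine sum_congr rfl fun i _ => ?_
    simp only [AddMonoidAlgebra.coeff_add, Finsupp.add_apply, coeff_mono, neg_eq_iff_eq_neg]
    by_cases hu : u = 0
    · by_cases hi : w i = 0 <;> simp [hu, hi]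
    · by_cases hi : w i = u
      · simp [hu, hi, self_eq_neg]
      · simp [hu, hi]
  have h' := congrArg (·.coeff u) h
  simp only [hcoeff] at h'
  exact_mod_cast mul_right_cancel₀ (by split_ifs <;> norm_num) h'

lemma exists_perm_eq_or_eq_neg {w w' : Fin n → Fin k → ℚ}
    (h : ∑ i, (mono (w i) + mono (-w i)) = ∑ i, (mono (w' i) + mono (-w' i))) :
    ∃ κ : Perm (Fin n), ∀ i, w i = w' (κ i) ∨ w i = -w' (κ i) := by
  classical
  have hmk (w : Fin n → Fin k → ℚ) (i : Fin n) (u u' : Fin k → ℚ) :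
      s(w i, -w i) = s(u, u') ↔ u' = -u ∧ (w i = u ∨ w i = -u) := by
    rw [Sym2.eq_iff]
    grind
  have hfiber (q : Sym2 (Fin k → ℚ)) :
      #{i | s(w i, -w i) = q} = #{i | s(w' i, -w' i) = q} := by
    induction q with | h u u' =>
    simp only [hmk, filter_and]
    by_cases hu : u' = -u <;> simp [hu, card_filter_eq_of_sum_mono_eq h u]
  let κ (q : Sym2 (Fin k → ℚ)) : {i // s(w i, -w i) = q} ≃ {i // s(w' i, -w' i) = q} :=
    Fintype.equivOfCardEq (by simpa only [Fintype.card_subtype] using hfiber q)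
  refine ⟨Equiv.ofFiberEquiv κ, fun i => ?_⟩
  exact ((hmk w i _ _).1 (Equiv.ofFiberEquiv_map κ i).symm).2

end Restriction

/-! ### Decomposition of symmetric characters in type `A_r` -/

section TypeA

variable {k n r : ℕ}

/-- The automorphism of the character ring induced by the permutation `τ` of the coordinates. -/
def permHom (τ : Perm (Fin k)) : CharRing k →+* CharRing k :=
  AddMonoidAlgebra.mapDomainRingHom ℤ (LinearMap.funLeft ℚ ℚ τ).toAddMonoidHom

lemma permHom_mono (τ : Perm (Fin k)) (v : Fin k → ℚ) : permHom τ (mono v) = mono (v ∘ τ) :=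
  AddMonoidAlgebra.mapDomain_single

lemma coeff_permHom_comp (τ : Perm (Fin k)) (f : CharRing k) (v : Fin k → ℚ) :
    (permHom τ f).coeff (v ∘ τ) = f.coeff v :=
  Finsupp.mapDomain_apply τ.surjective.injective_comp_right _ _

/-- An element of the character ring on which the symmetric group acts through the sign. -/
def IsAlternating (f : CharRing k) : Prop := ∀ τ, permHom τ f = (Perm.sign τ : ℤ) • f

namespace IsAlternating

variable {f g : CharRing k}

lemma coeff_comp (hf : IsAlternating f) (τ : Perm (Fin k)) (v : Fin k → ℚ) :
    f.coeff (v ∘ τ) = Perm.sign τ * f.coeff v := by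
  have h := coeff_permHom_comp τ f v
  rw [hf τ, AddMonoidAlgebra.coeff_smul_apply, smul_eq_mul] at h
  rw [← h, ← mul_assoc, Int.units_coe_mul_self, one_mul]

lemma coeff_eq_zero (hf : IsAlternating f) {v : Fin k → ℚ} (hv : ¬ Function.Injective v) :
    f.coeff v = 0 := by
  obtain ⟨i, j, hij, hne⟩ := Function.not_injective_iff.1 hv
  have hswap : v ∘ swap i j = v := by
    rw [comp_swap_eq_update, hij, Function.update_eq_self, ← hij, Function.update_eq_self]
  have h := hf.coeff_comp (swap i j) v
  rw [hswap, Perm.sign_swap hne] at h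
  simpa [self_eq_neg] using h

lemma ext_strictAnti (hf : IsAlternating f) (hg : IsAlternating g)
    (h : ∀ v, StrictAnti v → f.coeff v = g.coeff v) : f = g := by
  ext v
  by_cases hv : Function.Injective v
  · have hsort : StrictAnti (v ∘ Tuple.sort (-v)) := by
      refine Antitone.strictAnti_of_injective (fun i j hij => ?_) (hv.comp (Equiv.injective _))
      exact neg_le_neg_iff.1 (Tuple.monotone_sort (-v) hij)
    have hcoeff := h _ hsort
    rw [hf.coeff_comp, hg.coeff_comp] at hcoeff
    exact mul_left_cancel₀ (Units.ne_zero _) hcoeff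
  · rw [hf.coeff_eq_zero hv, hg.coeff_eq_zero hv]

lemma mul_left (hf : IsAlternating f) (hg : ∀ τ, permHom τ g = g) : IsAlternating (g * f) :=
  fun τ => by rw [map_mul, hg, hf, mul_smul_comm]

lemma zsmul (hf : IsAlternating f) (m : ℤ) : IsAlternating (m • f) :=
  fun τ => by rw [map_zsmul, hf, smul_comm]

lemma sum {ι : Type*} {s : Finset ι} {f : ι → CharRing k} (hf : ∀ i ∈ s, IsAlternating (f i)) :
    IsAlternating (∑ i ∈ s, f i) :=
  fun τ => by rw [map_sum, smul_sum]; exact sum_congr rfl fun i hi => hf i hi τ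

end IsAlternating

lemma altA_eq_det (r : ℕ) (v : Fin (r + 1) → ℚ) :
    altA r v = (Matrix.of fun a i => mono (Pi.single i (v a))).det := by
  simp only [Matrix.det_apply', altA, Matrix.of_apply, zsmul_eq_mul]
  exact sum_congr rfl fun σ _ => by rw [← prod_mono_single fun i => v (σ i)]

lemma isAlternating_altA (v : Fin (r + 1) → ℚ) : IsAlternating (altA r v) := by
  intro τ
  rw [altA, map_sum, smul_sum, ← Equiv.sum_comp (Equiv.mulRight τ⁻¹)]
  refine sum_congr rfl fun σ _ => ?_
  have hcomp : (fun i => v ((σ * τ⁻¹) i)) ∘ τ = fun i => v (σ i) := by ext i; simp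
  rw [Equiv.coe_mulRight, map_zsmul, permHom_mono, hcomp, smul_smul, Perm.sign_mul,
    Perm.sign_inv, mul_comm, Units.val_mul]

lemma coeff_altA_of_strictAnti {u v : Fin (r + 1) → ℚ} (hu : StrictAnti u) (hv : StrictAnti v) :
    (altA r v).coeff u = if v = u then 1 else 0 := by
  have hσ (σ : Perm (Fin (r + 1))) : (fun i => v (σ i)) = u ↔ σ = 1 ∧ v = u := by
    refine ⟨fun h => ?_, by rintro ⟨rfl, rfl⟩; rfl⟩
    have hanti : Antitone (v ∘ σ) := (h.symm ▸ hu.antitone :)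
    have hvσ : v ∘ σ = v := Tuple.unique_antitone (τ := 1) hanti hv.antitone
    exact ⟨Equiv.ext fun i => hv.injective (congrFun hvσ i), hvσ.symm.trans h⟩
  simp only [altA, AddMonoidAlgebra.coeff_sum, Finsupp.finsetSum_apply,
    AddMonoidAlgebra.coeff_smul_apply, coeff_mono, hσ, ite_and]
  simp

lemma slWt_castSucc_sub_succ (d : Fin r → ℕ) (j : Fin r) :
    slWt r d j.castSucc - slWt r d j.succ = d j := by
  have hfilter : univ.filter (fun i : Fin r => (j : ℕ) ≤ i) =
      insert j (univ.filter fun i : Fin r => (j : ℕ) + 1 ≤ i) := by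
    ext i
    simp only [mem_filter, mem_univ, true_and, mem_insert, Fin.ext_iff]
    omega
  simp only [slWt, partLift, Fin.val_castSucc, Fin.val_succ, hfilter]
  rw [sum_insert (by simp)]
  ring

lemma slWt_injective (r : ℕ) : Function.Injective (slWt r) := fun d d' h => by
  ext j
  exact_mod_cast (slWt_castSucc_sub_succ d j).symm.trans (h ▸ slWt_castSucc_sub_succ d' j)

lemma strictAnti_slWt_add_rhoA (d : Fin r → ℕ) : StrictAnti (slWt r d + rhoA r) := by
  refine Fin.strictAnti_iff_succ_lt.2 fun j => ?_
  have h := slWt_castSucc_sub_succ d j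
  simp only [Pi.add_apply, rhoA, Fin.val_succ, Fin.val_castSucc]
  push_cast
  have := (d j).cast_nonneg (α := ℚ)
  linarith

lemma strictAnti_rhoA (r : ℕ) : StrictAnti (rhoA r) := fun i j hij => by
  simpa [rhoA] using hij

lemma altA_rhoA_ne_zero (r : ℕ) : altA r (rhoA r) ≠ 0 := fun h => by
  have h1 := coeff_altA_of_strictAnti (strictAnti_rhoA r) (strictAnti_rhoA r)
  simp [h] at h1

lemma coeff_sum_altA_slWt (c : (Fin r → ℕ) →₀ ℕ) {u : Fin (r + 1) → ℚ} (hu : StrictAnti u) :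
    (c.sum fun μ k => (k : ℤ) • altA r (slWt r μ + rhoA r)).coeff u =
      c.sum fun μ k => if slWt r μ + rhoA r = u then (k : ℤ) else 0 := by
  simp only [Finsupp.sum, AddMonoidAlgebra.coeff_sum, Finsupp.finsetSum_apply,
    AddMonoidAlgebra.coeff_smul_apply, smul_eq_mul, mul_ite, mul_one, mul_zero,
    coeff_altA_of_strictAnti hu (strictAnti_slWt_add_rhoA _)]

lemma coeff_sum_altA_slWt_self (c : (Fin r → ℕ) →₀ ℕ) (d : Fin r → ℕ) :
    (c.sum fun μ k => (k : ℤ) • altA r (slWt r μ + rhoA r)).coeff (slWt r d + rhoA r) = c d := by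
  rw [coeff_sum_altA_slWt c (strictAnti_slWt_add_rhoA d)]
  simp +contextual [Finsupp.sum, (slWt_injective r).eq_iff]

lemma decomp_iff {F : CharRing (r + 1)} (hF : ∀ τ, permHom τ F = F)
    (hsupp : ∀ u, StrictAnti u → (F * altA r (rhoA r)).coeff u ≠ 0 → ∃ d, slWt r d + rhoA r = u)
    (c : (Fin r → ℕ) →₀ ℕ) :
    Decomp r F c ↔ ∀ d, (F * altA r (rhoA r)).coeff (slWt r d + rhoA r) = c d := by
  refine ⟨fun h d => by rw [h, coeff_sum_altA_slWt_self], fun h => ?_⟩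
  refine ((isAlternating_altA _).mul_left hF).ext_strictAnti
    (IsAlternating.sum fun μ _ => (isAlternating_altA _).zsmul _) fun u hu => ?_
  by_cases hd : ∃ d, slWt r d + rhoA r = u
  · obtain ⟨d, rfl⟩ := hd
    exact (h d).trans (coeff_sum_altA_slWt_self c d).symm
  · refine (not_not.1 fun hne => hd (hsupp u hu hne)).trans
      (.symm <| (coeff_sum_altA_slWt c hu).trans <| sum_eq_zero fun μ _ =>
        if_neg fun hμ => hd ⟨μ, hμ⟩)

theorem exists_decomp_le_one_iff {F : CharRing (r + 1)} (hF : ∀ τ, permHom τ F = F)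
    (hsupp : ∀ u, StrictAnti u → (F * altA r (rhoA r)).coeff u ≠ 0 →
      ∃ d, slWt r d + rhoA r = u) :
    (∃ c, Decomp r F c ∧ ∀ μ, c μ ≤ 1) ↔ ∀ d,
      (F * altA r (rhoA r)).coeff (slWt r d + rhoA r) = 0 ∨
        (F * altA r (rhoA r)).coeff (slWt r d + rhoA r) = 1 := by
  simp only [decomp_iff hF hsupp]
  constructor
  · rintro ⟨c, hc, hle⟩ d
    have := hle d
    rw [hc d]
    omega
  · intro h
    have hinj : Function.Injective fun d => slWt r d + rhoA r :=
      (add_left_injective _).comp (slWt_injective r)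
    refine ⟨((F * altA r (rhoA r)).coeff.comapDomain _ hinj.injOn).mapRange Int.toNat rfl,
      fun d => ?_, fun d => ?_⟩ <;>
    rw [Finsupp.mapRange_apply, Finsupp.comapDomain_apply] <;>
    rcases h d with hd | hd <;> simp [hd]

end TypeA

/-! ### Reduction to one weight system -/

section WeightSystem

variable {k n r : ℕ}

lemma WtSys.exists_perm_eq_or_eq_neg {t : CType} {δ : Fin r → ℕ} {w w' : Fin n → Fin (r + 1) → ℚ}
    (hw : WtSys t n r δ w) (hw' : WtSys t n r δ w') :
    ∃ κ : Perm (Fin n), ∀ i, w i = w' (κ i) ∨ w i = -w' (κ i) :=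
  MFPaper.exists_perm_eq_or_eq_neg
    (add_right_cancel (mul_right_cancel₀ (altA_rhoA_ne_zero r) (hw.trans hw'.symm)))

lemma permHom_resHom (τ : Perm (Fin k)) (w : Fin n → Fin k → ℚ) (f : CharRing n) :
    permHom τ (resHom w f) = resHom (fun i => w i ∘ τ) f := by
  rw [permHom, resHom, resHom, ← RingHom.comp_apply, ← AddMonoidAlgebra.mapDomainRingHom_comp]
  congr 2
  refine AddMonoidHom.ext fun v => funext fun j => ?_
  simp [Fintype.linearCombination_apply, LinearMap.funLeft_apply]

lemma WtSys.comp_perm {t : CType} {δ : Fin r → ℕ} {w : Fin n → Fin (r + 1) → ℚ}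
    (hw : WtSys t n r δ w) (τ : Perm (Fin (r + 1))) : WtSys t n r δ fun i => w i ∘ τ := by
  have hzero : permHom τ (if t = .B then mono 0 else 0) = if t = .B then mono 0 else 0 := by
    rw [apply_ite (permHom τ), permHom_mono, map_zero]; rfl
  have h := congrArg (permHom τ) hw
  simp only [map_mul, isAlternating_altA _ τ, map_sum, map_add, permHom_mono, hzero,
    mul_smul_comm] at h
  exact (Perm.sign τ).isUnit.smul_left_cancel.1 h

variable {δ : Fin r → ℕ} {w : Fin n → Fin (r + 1) → ℚ} {c : Fin n → ℕ} {f : CharRing n}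

lemma resHom_eq_of_wtSys {w' : Fin n → Fin (r + 1) → ℚ} (hw' : WtSys .D n r δ w')
    (hw : WtSys .D n r δ w) (hw₀ : ∃ i, w i = 0) (hρ : resHom w (altY .D n (rhoY .D n)) ≠ 0)
    (hf : IsCharY .D n c f) : resHom w' f = resHom w f :=
  let ⟨_, hκ⟩ := hw'.exists_perm_eq_or_eq_neg hw
  resHom_eq_of_eq_or_eq_neg hκ hw₀ hρ hf

lemma permHom_resHom_eq_self (hw : WtSys .D n r δ w) (hw₀ : ∃ i, w i = 0)
    (hρ : resHom w (altY .D n (rhoY .D n)) ≠ 0) (hf : IsCharY .D n c f)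
    (τ : Perm (Fin (r + 1))) : permHom τ (resHom w f) = resHom w f :=
  (permHom_resHom τ w f).trans (resHom_eq_of_wtSys (hw.comp_perm τ) hw hw₀ hρ hf)

lemma isMFRes_iff_exists_decomp (hw : WtSys .D n r δ w) (hw₀ : ∃ i, w i = 0)
    (hρ : resHom w (altY .D n (rhoY .D n)) ≠ 0) (hf : IsCharY .D n c f) :
    IsMFRes .D n r δ c ↔ ∃ m, Decomp r (resHom w f) m ∧ ∀ μ, m μ ≤ 1 := by
  refine ⟨fun h => h w hw f hf, fun h w' hw' f' hf' => ?_⟩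
  have hne : altY .D n (rhoY .D n) ≠ 0 := fun h0 => hρ (by rw [h0, map_zero])
  rwa [resChar_eq_resHom, resHom_eq_of_wtSys hw' hw hw₀ hρ hf',
    mul_left_cancel₀ hne (hf'.trans hf.symm)]

end WeightSystem

/-! ### Partition functions -/

section PartitionFunction

open Filter

variable {A B : Type*} [AddCommGroup A] [AddCommGroup B] {L : List A} {φ : A → ℤ}

/-- `φ` is a partition function of the list `L` of nonzero vectors `b₁, …, bₘ`: the formal sum of
the `φ v e^v` is an expansion of `∏ⱼ 1 / (1 - e^{bⱼ})`. Of the many such expansions we ask for those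
which, after multiplication by the `1 - e^{bᵢ}` with `i < j`, vanish far out in direction `-bⱼ`. -/
def IsPartitionFn : List A → (A → ℤ) → Prop
  | [], φ => φ 0 = 1 ∧ ∀ v ≠ 0, φ v = 0
  | b :: L, φ => b ≠ 0 ∧ (∀ v, ∀ᶠ m : ℕ in atTop, φ (v - m • b) = 0) ∧
      IsPartitionFn L fun v => φ v - φ (v - b)

lemma extend_sub_map {ι : A →+ B} (hι : Function.Injective ι) (φ : A → ℤ) (u : B) (a : A) :
    Function.extend ι φ 0 (u - ι a) = Function.extend ι (fun v => φ (v - a)) 0 u := by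
  by_cases hu : ∃ v, ι v = u
  · obtain ⟨v, rfl⟩ := hu
    rw [← map_sub, hι.extend_apply, hι.extend_apply]
  · rw [Function.extend_apply' _ _ _ hu, Function.extend_apply']
    · rfl
    · rintro ⟨v, hv⟩
      exact hu ⟨v + a, by rw [map_add, hv, sub_add_cancel]⟩

lemma IsPartitionFn.map {ι : A →+ B} (hι : Function.Injective ι) (h : IsPartitionFn L φ) :
    IsPartitionFn (L.map ι) (Function.extend ι φ 0) := by
  induction L generalizing φ with
  | nil =>
    refine ⟨by rw [← map_zero ι, hι.extend_apply, h.1], fun u hu => ?_⟩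
    by_cases hv : ∃ v, ι v = u
    · obtain ⟨v, rfl⟩ := hv
      rw [hι.extend_apply, h.2 v ((map_ne_zero_iff ι hι).1 hu)]
    · rw [Function.extend_apply' _ _ _ hv, Pi.zero_apply]
  | cons b L ih =>
    obtain ⟨hb, htail, hL⟩ := h
    refine ⟨(map_ne_zero_iff ι hι).2 hb, fun u => ?_, ?_⟩
    · simp_rw [← map_nsmul, extend_sub_map hι]
      by_cases hu : ∃ v, ι v = u
      · obtain ⟨v, rfl⟩ := hu
        simpa only [hι.extend_apply] using htail v
      · simp [Function.extend_apply' _ _ _ hu]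
    · convert ih hL using 1
      funext u
      rw [extend_sub_map hι]
      by_cases hu : ∃ v, ι v = u
      · obtain ⟨v, rfl⟩ := hu
        simp only [hι.extend_apply]
      · simp [Function.extend_apply' _ _ _ hu]

lemma eventually_coeff_add_nsmul_eq_zero [IsAddTorsionFree A] (X : AddMonoidAlgebra ℤ A) {b : A}
    (hb : b ≠ 0) (u : A) : ∀ᶠ m : ℕ in atTop, X.coeff (u + m • b) = 0 := by
  have hinj : Function.Injective fun m : ℕ => u + m • b :=
    (add_right_injective u).comp
      (injective_nsmul_iff_not_isOfFinAddOrder.2 (not_isOfFinAddOrder_of_isAddTorsionFree hb))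
  rw [← Nat.cofinite_eq_atTop]
  exact X.coeff.hasFiniteSupport.preimage hinj.injOn

lemma eq_of_sub_eq_sub_of_eventually_eq_zero {b : A} {f g : A → ℤ}
    (hfg : ∀ u, f u - f (u + b) = g u - g (u + b)) (hf : ∀ u, ∀ᶠ m : ℕ in atTop, f (u + m • b) = 0)
    (hg : ∀ u, ∀ᶠ m : ℕ in atTop, g (u + m • b) = 0) : f = g := by
  funext u
  have hperiod (m : ℕ) : f u - g u = f (u + m • b) - g (u + m • b) := by
    induction m with
    | zero => simp
    | succ m ih =>
      rw [succ_nsmul, ← add_assoc]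
      linear_combination ih + hfg (u + m • b)
  obtain ⟨m, hfm, hgm⟩ := ((hf u).and (hg u)).exists
  have := hperiod m
  rw [hfm, hgm] at this
  omega

/-- The factor of the Weyl denominator belonging to the positive root `b`. -/
def rootFactor {k : ℕ} (b : Fin k → ℚ) : CharRing k := 1 - mono (-b)

theorem IsPartitionFn.coeff_eq_sum {k : ℕ} {L : List (Fin k → ℚ)} {φ : (Fin k → ℚ) → ℤ}
    (h : IsPartitionFn L φ) {T : Type*} {s : Finset T} {n : T → ℤ} {y : T → Fin k → ℚ}
    {X : CharRing k}
    (hX : X * (L.map rootFactor).prod = ∑ t ∈ s, n t • mono (y t)) (u : Fin k → ℚ) :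
    X.coeff u = ∑ t ∈ s, n t * φ (y t - u) := by
  induction L generalizing φ X u with
  | nil =>
    rw [List.map_nil, List.prod_nil, mul_one] at hX
    rw [hX, AddMonoidAlgebra.coeff_sum, Finsupp.finsetSum_apply]
    refine sum_congr rfl fun t _ => ?_
    rw [AddMonoidAlgebra.coeff_smul_apply, coeff_mono, smul_eq_mul]
    split_ifs with hy
    · rw [hy, sub_self, h.1]
    · rw [h.2 _ (sub_ne_zero.2 hy)]
  | cons b L ih =>
    obtain ⟨hb, htail, hL⟩ := h
    rw [List.map_cons, List.prod_cons, ← mul_assoc] at hX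
    have hdiff (u : Fin k → ℚ) := ih hL hX u
    refine congrFun (eq_of_sub_eq_sub_of_eventually_eq_zero (b := b) (f := X.coeff)
      (g := fun u => ∑ t ∈ s, n t * φ (y t - u)) (fun u => ?_)
      (eventually_coeff_add_nsmul_eq_zero X hb) fun u => ?_) u
    · have hcoeff : (X * rootFactor b).coeff u = X.coeff u - X.coeff (u + b) := by
        rw [rootFactor, mul_sub, mul_one, AddMonoidAlgebra.coeff_sub, Finsupp.sub_apply,
          coeff_mul_mono, sub_neg_eq_add]
      rw [← hcoeff, hdiff, ← sum_sub_distrib]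
      exact sum_congr rfl fun t _ => by rw [mul_sub, sub_sub]
    · have hall : ∀ᶠ m : ℕ in atTop, ∀ t ∈ s, φ (y t - u - m • b) = 0 :=
        (eventually_all_finset s).2 fun t _ => htail _
      filter_upwards [hall] with m hm
      exact sum_eq_zero fun t ht => by rw [← sub_sub, hm t ht, mul_zero]

end PartitionFunction

/-! ### The root systems of `A₂ < D₄` -/

section RootSystem

/-- A choice of half of the weights of the adjoint module of `A₂`: the positive roots
`α + β`, `α`, `β` and one of the two zero weights. -/
def w₀ : Fin 4 → Fin 3 → ℚ := ![![1, 0, -1], ![1, -1, 0], ![0, 1, -1], 0]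

lemma altA_two (a b c : ℚ) : altA 2 ![a, b, c] = mono ![a, b, c] - mono ![a, c, b] -
    mono ![b, a, c] + mono ![b, c, a] + mono ![c, a, b] - mono ![c, b, a] := by
  have hmono (x y z : ℚ) : mono ![x, y, z] =
      mono (Pi.single 0 x) * mono (Pi.single 1 y) * mono (Pi.single 2 z) := by
    rw [← prod_mono_single, Fin.prod_univ_three]
    rfl
  rw [altA_eq_det, Matrix.det_fin_three]
  simp only [hmono, Matrix.of_apply, Matrix.cons_val]
  ring

lemma rhoA_two : rhoA 2 = ![2, 1, 0] := by
  funext i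
  fin_cases i <;> norm_num [rhoA]

lemma wtSys_w₀ : WtSys .D 4 2 (e 2 1 + e 2 2) w₀ := by
  have hδ : slWt 2 (e 2 1 + e 2 2) = ![1, 0, -1] := by
    funext i
    fin_cases i <;> simp [slWt, partLift, e, Fin.sum_univ_two, sum_filter] <;> norm_num
  have hw : ∑ i, (mono (w₀ i) + mono (-w₀ i)) = mono ![1, 0, -1] + mono ![-1, 0, 1] +
      (mono ![1, -1, 0] + mono ![-1, 1, 0]) + (mono ![0, 1, -1] + mono ![0, -1, 1]) + 2 := by
    have h2 : w₀ 2 = ![0, 1, -1] := rfl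
    have h3 : w₀ 3 = 0 := rfl
    rw [Fin.sum_univ_four, h2, h3, neg_zero, mono_zero, one_add_one_eq_two]
    simp [w₀]
  rw [WtSys, hδ, rhoA_two, if_neg (by decide), add_zero, hw]
  norm_num only [altA_two, Matrix.add_cons, Matrix.head_cons, Matrix.tail_cons,
    Matrix.empty_add_empty]
  simp only [mul_add, mul_sub, add_mul, ← mono_add]
  norm_num
  ring

/-- The map sending `(p, q)` to the restriction to `A₂` of any `p₁ α₁ + q α₂ + p₃ α₃ + p₄ α₄` with
`p₁ + p₃ + p₄ = p`, where the `αᵢ` are the simple roots of `D₄`. It is well defined because `α₁`,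
`α₃` and `α₄` have the same restriction. -/
def rootRes : ℤ × ℤ →+ Fin 3 → ℚ where
  toFun v := ![v.2, v.1 - 2 * v.2, v.2 - v.1]
  map_zero' := by simp
  map_add' u v := by
    ext i
    fin_cases i <;> simp <;> ring

lemma rootRes_injective : Function.Injective rootRes := fun u v h => by
  have h0 : (u.2 : ℚ) = v.2 := congrFun h 0
  have h1 : (u.1 - 2 * u.2 : ℚ) = v.1 - 2 * v.2 := congrFun h 1
  ext
  · exact_mod_cast (by linarith : (u.1 : ℚ) = v.1)
  · exact_mod_cast h0

/-- The positive roots of `A₂`, as arguments of `rootRes`. -/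
def posRootsA₂ : List (ℤ × ℤ) := [(1, 0), (1, 1), (2, 1)]

/-- The restrictions to `A₂` of the positive roots of `D₄`, with one copy of each positive root of
`A₂` removed, as arguments of `rootRes`. -/
def extraRoots : List (ℤ × ℤ) :=
  [(3, 2), (3, 1), (2, 1), (2, 1), (1, 1), (1, 1), (0, 1), (1, 0), (1, 0)]

lemma mono_sub_mono {k : ℕ} (a b : Fin k → ℚ) :
    mono a - mono b = mono a * rootFactor (a - b) := by
  rw [rootFactor, mul_sub, mul_one, ← mono_add, neg_sub, add_sub_cancel]

lemma mono_add_mono_neg_sub {k : ℕ} (a b : Fin k → ℚ) :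
    mono a + mono (-a) - (mono b + mono (-b)) =
      mono a * rootFactor (a - b) * rootFactor (a + b) := by
  have h1 := mono_sub_mono a b
  have h2 := mono_sub_mono a (-b)
  have h3 : mono b * mono (-(a + b)) = mono (-a) := by rw [← mono_add]; congr 1; abel
  rw [sub_neg_eq_add] at h2
  rw [← h1, rootFactor] at *
  linear_combination h2 - h3

lemma altA_two_rhoA : altA 2 (rhoA 2) =
    mono ![2, 1, 0] * (posRootsA₂.map fun b => rootFactor (rootRes b)).prod := by
  rw [rhoA_two, altA_two]
  simp only [posRootsA₂, rootRes, rootFactor, mul_sub, sub_mul, ← mono_add, List.map_cons,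
    List.map_nil, List.prod_cons, List.prod_nil, mul_one, one_mul, AddMonoidHom.coe_mk,
    ZeroHom.coe_mk, ← add_assoc]
  norm_num
  ring

lemma resHom_w₀_altY_rhoY : resHom w₀ (altY .D 4 (rhoY .D 4)) =
    mono ![5, -1, -4] *
      ((posRootsA₂ ++ extraRoots).map fun b => rootFactor (rootRes b)).prod := by
  have hmono : mono ![(5 : ℚ), -1, -4] = mono ![0, 1, -1] * (mono ![1, -1, 0] * mono ![1, 0, -1]) *
      (mono ![1, -1, 0] * mono ![1, 0, -1]) * mono ![1, 0, -1] := by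
    norm_num [← mono_add]
  rw [resHom_altY_rhoY, Matrix.det_vandermonde, hmono]
  norm_num [Fin.prod_univ_succ, Fin.prod_Ioi_succ, mono_add_mono_neg_sub, posRootsA₂, extraRoots,
    rootRes, Fin.rev, w₀, -neg_sub]
  ring

lemma resHom_w₀_altY_rhoY_ne_zero : resHom w₀ (altY .D 4 (rhoY .D 4)) ≠ 0 := by
  have hc : (0 : ℤ × ℤ) ∉ posRootsA₂ ++ extraRoots := by decide
  rw [resHom_w₀_altY_rhoY]
  refine mul_ne_zero (mono_ne_zero _) (List.prod_ne_zero fun h => ?_)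
  obtain ⟨b, hb, hb0⟩ := List.mem_map.1 h
  rw [rootFactor, sub_eq_zero, ← mono_zero] at hb0
  have hb' : 0 = -rootRes b := AddMonoidAlgebra.single_left_injective one_ne_zero hb0
  rw [zero_eq_neg, map_eq_zero_iff _ rootRes_injective] at hb'
  exact hc (hb' ▸ hb)

end RootSystem

/-! ### The partition function of the extra roots -/

section RaySum

/-- Summation of `φ` along the ray `v, v - b, v - 2b, …`, for a function `φ` vanishing outside the
quadrant: it turns a partition function of `L` into one of `b :: L`. -/
def raySum (b : ℤ × ℤ) (φ : ℤ × ℤ → ℤ) (v : ℤ × ℤ) : ℤ :=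
  if 0 ≤ v then ∑ k ∈ range (v.2.toNat + 1), φ (v - k • b) else 0

variable {L M : List (ℤ × ℤ)} {b v : ℤ × ℤ} {φ : ℤ × ℤ → ℤ}

lemma raySum_eq_sum_range (hφ : ∀ v, ¬0 ≤ v → φ v = 0) (hb : 0 ≤ b) (hb' : 0 < b.2) {N : ℕ}
    (hN : v.2 < N) : raySum b φ v = ∑ k ∈ range N, φ (v - k • b) := by
  rw [raySum]
  split_ifs with hv
  · refine sum_subset (range_mono ?_) fun k _ hk => hφ _ fun hneg => hk ?_
    · have := hv.2
      simp only [Prod.snd_zero] at this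
      omega
    · have h2 : 0 ≤ v.2 - k * b.2 := by simpa using hneg.2
      rw [mem_range]
      have : (k : ℤ) ≤ v.2 := by nlinarith
      omega
  · refine (sum_eq_zero fun k _ => hφ _ fun hneg => hv ?_).symm
    simpa using add_nonneg hneg (nsmul_nonneg hb k)

lemma IsPartitionFn.raySum (h : IsPartitionFn L φ) (hφ : ∀ v, ¬0 ≤ v → φ v = 0) (hb : 0 ≤ b)
    (hb' : 0 < b.2) : IsPartitionFn (b :: L) (raySum b φ) := by
  refine ⟨fun h0 => by simp [h0] at hb', fun v => ?_, ?_⟩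
  · filter_upwards [Filter.eventually_gt_atTop v.2.toNat] with m hm
    refine if_neg fun hneg => ?_
    have h2 : 0 ≤ v.2 - m * b.2 := by simpa using hneg.2
    have : (m : ℤ) ≤ v.2 := by nlinarith
    omega
  · convert h using 1
    funext v
    have hN : v.2 < (v.2.toNat + 1 : ℕ) := by omega
    have hN' : (v - b).2 < (v.2.toNat + 1 : ℕ) := by rw [Prod.snd_sub]; omega
    have hstep (k : ℕ) : v - (k + 1) • b = v - b - k • b := by rw [succ_nsmul', sub_sub]
    rw [raySum_eq_sum_range hφ hb hb' (hN.trans (Nat.cast_lt.2 (Nat.lt_succ_self _))),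
      raySum_eq_sum_range hφ hb hb' hN', sum_range_succ']
    simp only [hstep, zero_smul, sub_zero, add_sub_cancel_left]

lemma isPartitionFn_foldr_raySum (hM : ∀ b ∈ M, 0 ≤ b ∧ 0 < b.2) (h : IsPartitionFn L φ)
    (hφ : ∀ v, ¬0 ≤ v → φ v = 0) :
    IsPartitionFn (M ++ L) (M.foldr raySum φ) ∧ ∀ v, ¬0 ≤ v → M.foldr raySum φ v = 0 := by
  induction M with
  | nil => exact ⟨h, hφ⟩
  | cons b M ih =>
    obtain ⟨hM', hsupp⟩ := ih fun c hc => hM c (List.mem_cons_of_mem b hc)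
    obtain ⟨hb, hb'⟩ := hM b List.mem_cons_self
    exact ⟨hM'.raySum hsupp hb hb', fun v hv => if_neg hv⟩

/-- The number of ways to write `v` as a sum of copies of `(0, 1)` and of two distinguishable
copies of `(1, 0)`. -/
def basicPartitionFn (v : ℤ × ℤ) : ℤ := if 0 ≤ v then v.1 + 1 else 0

lemma isPartitionFn_basicPartitionFn :
    IsPartitionFn [(0, 1), (1, 0), (1, 0)] basicPartitionFn := by
  refine ⟨by decide, fun v => ?_, by decide, fun v => ?_, by decide, fun v => ?_, by decide,
    fun v hv => ?_⟩
  · filter_upwards [Filter.eventually_gt_atTop v.2.toNat] with m hm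
    simp only [basicPartitionFn, Prod.le_def, Prod.fst_zero, Prod.snd_zero, Prod.snd_sub,
      Prod.smul_mk, nsmul_eq_mul, mul_one]
    split_ifs <;> omega
  · filter_upwards [Filter.eventually_gt_atTop v.1.toNat] with m hm
    simp only [basicPartitionFn, Prod.le_def, Prod.fst_zero, Prod.snd_zero, Prod.fst_sub,
      Prod.snd_sub, Prod.smul_mk, nsmul_eq_mul, mul_one, mul_zero]
    split_ifs <;> omega
  · filter_upwards [Filter.eventually_gt_atTop v.1.toNat] with m hm
    simp only [basicPartitionFn, Prod.le_def, Prod.fst_zero, Prod.snd_zero, Prod.fst_sub,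
      Prod.snd_sub, Prod.smul_mk, nsmul_eq_mul, mul_one, mul_zero]
    split_ifs <;> omega
  · simp only [ne_eq, Prod.ext_iff, Prod.fst_zero, Prod.snd_zero] at hv
    simp only [basicPartitionFn, Prod.le_def, Prod.fst_zero, Prod.snd_zero, Prod.fst_sub,
      Prod.snd_sub]
    split_ifs <;> omega

/-- The partition function of `extraRoots`. -/
def extraPartitionFn : ℤ × ℤ → ℤ :=
  [(3, 2), (3, 1), (2, 1), (2, 1), (1, 1), (1, 1)].foldr raySum basicPartitionFn

lemma extraPartitionFn_spec : IsPartitionFn extraRoots extraPartitionFn ∧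
    ∀ v, ¬0 ≤ v → extraPartitionFn v = 0 :=
  isPartitionFn_foldr_raySum (M := [(3, 2), (3, 1), (2, 1), (2, 1), (1, 1), (1, 1)]) (by decide)
    isPartitionFn_basicPartitionFn fun _ hv => if_neg hv

end RaySum

/-! ### Multiplicities as values of a partition function -/

section BranchMult

/-- The signed permutation module: `g = (σ, s)` permutes the coordinates by `σ` and then changes
the signs of those selected by `s`. -/
def signedPerm {R : Type*} [Ring R] {n : ℕ} (g : Perm (Fin n) × (Fin n → Bool)) (v : Fin n → R) :
    Fin n → R :=
  fun i => (if g.2 i then -1 else 1) * v (g.1 i)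

/-- The Weyl group of type `D_n`, as a set of signed permutations. -/
def weylD (n : ℕ) : Finset (Perm (Fin n) × (Fin n → Bool)) := {g | Even #{i | g.2 i = true}}

lemma altY_D_eq_sum_weylD {n : ℕ} (v : Fin n → ℚ) :
    altY .D n v = ∑ g ∈ weylD n, (Perm.sign g.1 : ℤ) • mono (signedPerm g v) := by
  rw [altY, ← Fintype.sum_prod_type', weylD, sum_filter]
  refine sum_congr rfl fun g _ => ?_
  by_cases hg : Even #{i | g.2 i = true}
  · rw [if_neg (by simp [hg]), if_pos hg, hg.neg_one_pow, mul_one]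
    rfl
  · rw [if_pos ⟨rfl, hg⟩, if_neg hg]

/-- Twice the fundamental weights of `D₄`, in `ε`-coordinates. -/
def twiceFundWt : Fin 4 → Fin 4 → ℤ :=
  ![![2, 0, 0, 0], ![2, 2, 0, 0], ![1, 1, 1, -1], ![1, 1, 1, 1]]

lemma epsWt_add_rhoY_four (lam : Fin 4 → ℕ) (j : Fin 4) :
    (epsWt .D 4 lam + rhoY .D 4) j = ∑ i, ((lam i + 1 : ℚ) / 2) * twiceFundWt i j := by
  fin_cases j <;>
    simp [epsWt, rhoY, cval, twiceFundWt, sum_filter, Fin.sum_univ_four] <;> ring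

/-- The pair whose image under `rootRes` is the restriction to `A₂` of `ωᵢ - g ωᵢ`, for the `i`-th
fundamental weight `ωᵢ` of `D₄` and `g` in the Weyl group. -/
def weylShift (g : Perm (Fin 4) × (Fin 4 → Bool)) (i : Fin 4) : ℤ × ℤ :=
  let x := twiceFundWt i - signedPerm g (twiceFundWt i)
  ((2 * x 0 + x 1 + x 2) / 2, (x 0 + x 1) / 2)

lemma two_dvd_twiceFundWt_sub_signedPerm (g : Perm (Fin 4) × (Fin 4 → Bool)) (i j : Fin 4) :
    2 ∣ (twiceFundWt i - signedPerm g (twiceFundWt i)) j := by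
  have hparity : ∀ i j k, 2 ∣ twiceFundWt i j - twiceFundWt i k ∧
      2 ∣ twiceFundWt i j + twiceFundWt i k := by decide
  obtain ⟨hsub, hadd⟩ := hparity i j (g.1 j)
  rw [Pi.sub_apply, signedPerm]
  split_ifs
  · simpa using hadd
  · simpa using hsub

lemma rootRes_weylShift (g : Perm (Fin 4) × (Fin 4 → Bool)) (i : Fin 4) :
    rootRes (weylShift g i) =
      ∑ j, ((twiceFundWt i j - signedPerm g (fun k => (twiceFundWt i k : ℚ)) j) / 2) • w₀ j := by
  have hcast (j : Fin 4) : (twiceFundWt i j - signedPerm g (fun k => (twiceFundWt i k : ℚ)) j) =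
      ((twiceFundWt i - signedPerm g (twiceFundWt i)) j : ℤ) := by
    simp only [Pi.sub_apply, signedPerm]
    push_cast
    rfl
  choose y hy using two_dvd_twiceFundWt_sub_signedPerm g i
  simp only [hcast, weylShift, hy]
  ext k
  fin_cases k <;> simp [rootRes, w₀, Fin.sum_univ_four] <;> ring_nf

/-- The restriction to `A₂` of the weight `lam` of `D₄`. -/
def resTopWt (lam : Fin 4 → ℕ) : Fin 2 → ℕ :=
  ![lam 0 + 3 * lam 1 + lam 2 + lam 3, lam 0 + lam 2 + lam 3]

lemma slWt_two (d : Fin 2 → ℕ) : slWt 2 d =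
    (![(2 * d 0 + d 1) / 3, (d 1 - d 0) / 3, -(d 0 + 2 * d 1) / 3] : Fin 3 → ℚ) := by
  ext k
  fin_cases k <;> simp [slWt, partLift, Fin.sum_univ_two, sum_filter] <;> ring

lemma sum_signedPerm_smul_w₀ (lam : Fin 4 → ℕ) (g : Perm (Fin 4) × (Fin 4 → Bool)) :
    ∑ j, signedPerm g (epsWt .D 4 lam + rhoY .D 4) j • w₀ j = ![3, -2, -4] +
      (slWt 2 (resTopWt lam) + rhoA 2 - rootRes (∑ i, (lam i + 1) • weylShift g i)) := by
  have hlin (j : Fin 4) : signedPerm g (epsWt .D 4 lam + rhoY .D 4) j =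
      ∑ i, (lam i + 1 : ℚ) / 2 * signedPerm g (fun k => (twiceFundWt i k : ℚ)) j := by
    simp only [signedPerm, epsWt_add_rhoY_four, mul_sum, mul_left_comm]
  simp only [hlin, map_sum, map_nsmul, rootRes_weylShift, slWt_two, rhoA_two]
  ext k
  fin_cases k <;> simp [w₀, Fin.sum_univ_four, resTopWt, twiceFundWt] <;> ring

/-- The multiplicity, in the restriction to `A₂` of the irreducible `D₄`-module of highest weight
`lam`, of the irreducible `A₂`-module whose highest weight is `rootRes v` below `resTopWt lam`, as
given by the Weyl character formula of `D₄`. -/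
def branchMult (lam : Fin 4 → ℕ) (v : ℤ × ℤ) : ℤ :=
  ∑ g ∈ weylD 4, (Perm.sign g.1 : ℤ) * extraPartitionFn (v - ∑ i, (lam i + 1) • weylShift g i)

variable {lam : Fin 4 → ℕ} {f : CharRing 4}

lemma resHom_mul_altA_mul_prod (hf : IsCharY .D 4 lam f) :
    resHom w₀ f * altA 2 (rhoA 2) * ((extraRoots.map rootRes).map rootFactor).prod =
      ∑ g ∈ weylD 4, (Perm.sign g.1 : ℤ) •
        mono (slWt 2 (resTopWt lam) + rhoA 2 - rootRes (∑ i, (lam i + 1) • weylShift g i)) := by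
  have hsplit : mono ![(5 : ℚ), -1, -4] = mono ![3, -2, -4] * mono ![2, 1, 0] := by
    norm_num [← mono_add]
  refine mul_left_cancel₀ (mono_ne_zero ![3, -2, -4]) ?_
  calc _ = resHom w₀ (altY .D 4 (rhoY .D 4)) * resHom w₀ f := by
        rw [resHom_w₀_altY_rhoY, altA_two_rhoA, hsplit, List.map_append, List.prod_append,
          List.map_map, Function.comp_def]
        ring
    _ = ∑ g ∈ weylD 4, (Perm.sign g.1 : ℤ) •
          mono (∑ j, signedPerm g (epsWt .D 4 lam + rhoY .D 4) j • w₀ j) := by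
        rw [← map_mul, hf, altY_D_eq_sum_weylD, map_sum]
        simp only [map_zsmul, resHom_mono]
    _ = _ := by simp only [sum_signedPerm_smul_w₀, mono_add, mul_sum, mul_smul_comm]

lemma coeff_resHom_mul_altA (hf : IsCharY .D 4 lam f) (v : ℤ × ℤ) :
    (resHom w₀ f * altA 2 (rhoA 2)).coeff (slWt 2 (resTopWt lam) + rhoA 2 - rootRes v) =
      branchMult lam v := by
  rw [(extraPartitionFn_spec.1.map rootRes_injective).coeff_eq_sum (resHom_mul_altA_mul_prod hf)]
  refine sum_congr rfl fun g _ => ?_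
  rw [sub_sub_sub_cancel_left, ← map_sub, rootRes_injective.extend_apply]

lemma exists_eq_sub_rootRes_of_coeff_ne_zero (hf : IsCharY .D 4 lam f) {u : Fin 3 → ℚ}
    (hu : (resHom w₀ f * altA 2 (rhoA 2)).coeff u ≠ 0) :
    ∃ v, u = slWt 2 (resTopWt lam) + rhoA 2 - rootRes v := by
  rw [(extraPartitionFn_spec.1.map rootRes_injective).coeff_eq_sum
    (resHom_mul_altA_mul_prod hf)] at hu
  obtain ⟨g, -, hg⟩ := exists_ne_zero_of_sum_ne_zero hu
  by_contra! hne
  refine right_ne_zero_of_mul hg (Function.extend_apply' _ _ _ ?_)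
  rintro ⟨v, hv⟩
  refine hne (v + ∑ i, (lam i + 1) • weylShift g i) ?_
  rw [map_add, hv]
  abel

lemma nonneg_of_strictAnti_sub_rootRes {c : Fin 2 → ℕ} {p q : ℤ}
    (h : StrictAnti (slWt 2 c + rhoA 2 - rootRes (p, q))) :
    0 ≤ c 0 + p - 3 * q ∧ 0 ≤ c 1 - 2 * p + 3 * q := by
  have h0 := h (show (0 : Fin 3) < 1 by decide)
  have h1 := h (show (1 : Fin 3) < 2 by decide)
  simp only [Pi.sub_apply, Pi.add_apply, slWt_two, rhoA_two, rootRes, AddMonoidHom.coe_mk,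
    ZeroHom.coe_mk, Matrix.cons_val] at h0 h1
  have h0' : (-1 : ℚ) < (c 0 + p - 3 * q : ℤ) := by push_cast; linarith
  have h1' : (-1 : ℚ) < (c 1 - 2 * p + 3 * q : ℤ) := by push_cast; linarith
  exact ⟨by exact_mod_cast h0', by exact_mod_cast h1'⟩

lemma exists_slWt_eq_sub_rootRes {c : Fin 2 → ℕ} {p q : ℤ} (h0 : 0 ≤ c 0 + p - 3 * q)
    (h1 : 0 ≤ c 1 - 2 * p + 3 * q) : ∃ d, slWt 2 d = slWt 2 c - rootRes (p, q) := by
  obtain ⟨d₀, hd₀⟩ := Int.eq_ofNat_of_zero_le h0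
  obtain ⟨d₁, hd₁⟩ := Int.eq_ofNat_of_zero_le h1
  qify at hd₀ hd₁
  refine ⟨![d₀, d₁], ?_⟩
  rw [slWt_two, slWt_two]
  ext k
  fin_cases k <;> simp [rootRes, ← hd₀, ← hd₁] <;> ring

lemma isMFRes_iff_forall_int : IsMFRes .D 4 2 (e 2 1 + e 2 2) lam ↔
    ∀ p q : ℤ, 0 ≤ resTopWt lam 0 + p - 3 * q → 0 ≤ resTopWt lam 1 - 2 * p + 3 * q →
      branchMult lam (p, q) = 0 ∨ branchMult lam (p, q) = 1 := by
  obtain ⟨f, hf⟩ := exists_isCharY_D lam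
  have hshift {d : Fin 2 → ℕ} {v : ℤ × ℤ} (h : slWt 2 d = slWt 2 (resTopWt lam) - rootRes v) :
      slWt 2 d + rhoA 2 = slWt 2 (resTopWt lam) + rhoA 2 - rootRes v := by
    rw [h, sub_add_eq_add_sub]
  rw [isMFRes_iff_exists_decomp wtSys_w₀ ⟨3, rfl⟩ resHom_w₀_altY_rhoY_ne_zero hf,
    exists_decomp_le_one_iff
      (permHom_resHom_eq_self wtSys_w₀ ⟨3, rfl⟩ resHom_w₀_altY_rhoY_ne_zero hf)]
  · constructor
    · intro h p q h0 h1
      obtain ⟨d, hd⟩ := exists_slWt_eq_sub_rootRes h0 h1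
      simpa only [hshift hd, coeff_resHom_mul_altA hf] using h d
    · intro h d
      by_contra! hd
      obtain ⟨⟨p, q⟩, hpq⟩ := exists_eq_sub_rootRes_of_coeff_ne_zero hf hd.1
      obtain ⟨h0, h1⟩ := nonneg_of_strictAnti_sub_rootRes (hpq ▸ strictAnti_slWt_add_rhoA d)
      rw [hpq, coeff_resHom_mul_altA hf] at hd
      exact (h p q h0 h1).elim hd.1 hd.2
  · intro u hu hne
    obtain ⟨⟨p, q⟩, rfl⟩ := exists_eq_sub_rootRes_of_coeff_ne_zero hf hne
    obtain ⟨h0, h1⟩ := nonneg_of_strictAnti_sub_rootRes hu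
    obtain ⟨d, hd⟩ := exists_slWt_eq_sub_rootRes h0 h1
    exact ⟨d, hshift hd⟩

lemma weylShift_nonneg : ∀ g ∈ weylD 4, ∀ i, 0 ≤ weylShift g i := by decide +kernel

lemma extraPartitionFn_sub_weylShift_eq_zero {g : Perm (Fin 4) × (Fin 4 → Bool)}
    (hg : g ∈ weylD 4) {v : ℤ × ℤ} {N : ℕ} (h1 : v.1 ≤ N) (h2 : v.2 ≤ N) {i : Fin 4}
    (hi : weylShift g i ≠ 0) (hN : N ≤ lam i) :
    extraPartitionFn (v - ∑ i, (lam i + 1) • weylShift g i) = 0 := by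
  refine extraPartitionFn_spec.2 _ fun h => ?_
  have hle : (lam i + 1) • weylShift g i ≤ v :=
    (single_le_sum (fun j _ => nsmul_nonneg (weylShift_nonneg g hg j) (lam j + 1))
      (mem_univ i)).trans (sub_nonneg.1 h)
  have hN' : (N : ℤ) ≤ lam i := by exact_mod_cast hN
  have hp : (lam i + 1) • (weylShift g i).1 ≤ v.1 := hle.1
  have hq : (lam i + 1) • (weylShift g i).2 ≤ v.2 := hle.2
  rw [nsmul_eq_mul, Nat.cast_add, Nat.cast_one] at hp hq
  rw [Ne, Prod.ext_iff, not_and_or] at hi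
  rcases hi with hi | hi
  · have := (weylShift_nonneg g hg i).1.lt_of_ne' hi
    simp only [Prod.fst_zero] at this
    nlinarith
  · have := (weylShift_nonneg g hg i).2.lt_of_ne' hi
    simp only [Prod.snd_zero] at this
    nlinarith

lemma extraPartitionFn_sub_weylShift_min {g : Perm (Fin 4) × (Fin 4 → Bool)} (hg : g ∈ weylD 4)
    {v : ℤ × ℤ} {N : ℕ} (h1 : v.1 ≤ N) (h2 : v.2 ≤ N) :
    extraPartitionFn (v - ∑ i, (min (lam i) N + 1) • weylShift g i) =
      extraPartitionFn (v - ∑ i, (lam i + 1) • weylShift g i) := by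
  by_cases h : ∃ i, weylShift g i ≠ 0 ∧ N ≤ lam i
  · obtain ⟨i, hi, hN⟩ := h
    rw [extraPartitionFn_sub_weylShift_eq_zero hg h1 h2 hi hN,
      extraPartitionFn_sub_weylShift_eq_zero hg h1 h2 (lam := fun i => min (lam i) N) hi
        (le_min hN le_rfl)]
  · push Not at h
    congr 2
    refine sum_congr rfl fun i _ => ?_
    by_cases hi : weylShift g i = 0
    · rw [hi, smul_zero, smul_zero]
    · rw [min_eq_left (h i hi).le]

lemma branchMult_min {v : ℤ × ℤ} {N : ℕ} (h1 : v.1 ≤ N) (h2 : v.2 ≤ N) :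
    branchMult ![min (lam 0) N, min (lam 1) N, min (lam 2) N, min (lam 3) N] v =
      branchMult lam v := by
  have hmin : ![min (lam 0) N, min (lam 1) N, min (lam 2) N, min (lam 3) N] =
      fun i => min (lam i) N := by
    funext i
    fin_cases i <;> rfl
  rw [hmin]
  refine sum_congr rfl fun g hg => ?_
  rw [extraPartitionFn_sub_weylShift_min hg h1 h2]

lemma branchMult_eq_zero_of_not_nonneg {v : ℤ × ℤ} (hv : ¬0 ≤ v) : branchMult lam v = 0 := by
  refine sum_eq_zero fun g hg => mul_eq_zero_of_right _ (extraPartitionFn_spec.2 _ fun h => hv ?_)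
  exact (sum_nonneg fun i _ => nsmul_nonneg (weylShift_nonneg g hg i) _).trans (sub_nonneg.1 h)

theorem isMFRes_iff_branchMult : IsMFRes .D 4 2 (e 2 1 + e 2 2) lam ↔
    ∀ p ≤ resTopWt lam 0 + resTopWt lam 1, ∀ q ≤ resTopWt lam 0 + resTopWt lam 1,
      3 * q ≤ resTopWt lam 0 + p → 2 * p ≤ resTopWt lam 1 + 3 * q →
        branchMult lam (p, q) = 0 ∨ branchMult lam (p, q) = 1 := by
  rw [isMFRes_iff_forall_int]
  refine ⟨fun h p _ q _ h0 h1 => h p q (by omega) (by omega), fun h p q h0 h1 => ?_⟩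
  by_cases hpq : 0 ≤ p ∧ 0 ≤ q
  · lift p to ℕ using hpq.1
    lift q to ℕ using hpq.2
    exact h p (by omega) q (by omega) (by omega) (by omega)
  · exact Or.inl (branchMult_eq_zero_of_not_nonneg hpq)

end BranchMult

/-! ### The classification -/

section Evaluation

set_option maxRecDepth 10000

lemma isMFRes_smul_e : ∀ c ∈ range 6, ∀ i ∈ ({1, 3, 4} : Finset ℕ),
    IsMFRes .D 4 2 (e 2 1 + e 2 2) (c • e 4 i) := by
  simp only [isMFRes_iff_branchMult]
  decide +kernel

lemma isMFRes_e_add_e : ∀ i ∈ ({1, 3, 4} : Finset ℕ), ∀ j ∈ ({1, 3, 4} : Finset ℕ), i ≠ j →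
    IsMFRes .D 4 2 (e 2 1 + e 2 2) (e 4 i + e 4 j) := by
  simp only [isMFRes_iff_branchMult]
  decide +kernel

lemma isMFRes_e_two : IsMFRes .D 4 2 (e 2 1 + e 2 2) (e 4 2) := by
  rw [isMFRes_iff_branchMult]
  decide +kernel

end Evaluation

section Classification

set_option maxRecDepth 10000

variable {lam : Fin 4 → ℕ}

lemma not_isMFRes_of_two_le_branchMult {p q N : ℕ} (hp : p ≤ N) (hq : q ≤ N)
    (h0 : 3 * q ≤ lam 0 + 3 * lam 1 + lam 2 + lam 3 + p)
    (h1 : 2 * p ≤ lam 0 + lam 2 + lam 3 + 3 * q)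
    (h : 2 ≤ branchMult ![min (lam 0) N, min (lam 1) N, min (lam 2) N, min (lam 3) N] (p, q)) :
    ¬IsMFRes .D 4 2 (e 2 1 + e 2 2) lam := by
  rw [branchMult_min (Int.ofNat_le.2 hp) (Int.ofNat_le.2 hq)] at h
  rw [isMFRes_iff_branchMult]
  intro hmf
  have hc0 : resTopWt lam 0 = lam 0 + 3 * lam 1 + lam 2 + lam 3 := rfl
  have hc1 : resTopWt lam 1 = lam 0 + lam 2 + lam 3 := rfl
  have := hmf p (by omega) q (by omega) (by omega) (by omega)
  omega

lemma lam_one_eq_zero_or_eq_of_isMFRes (h : IsMFRes .D 4 2 (e 2 1 + e 2 2) lam) :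
    lam 1 = 0 ∨ lam 1 = 1 ∧ lam 0 + lam 2 + lam 3 = 0 := by
  have hmixed : ∀ a ≤ 1, ∀ c ≤ 1, ∀ d ≤ 1, 1 ≤ a + c + d →
      2 ≤ branchMult ![a, 1, c, d] (1, 1) := by decide +kernel
  have hpure : 2 ≤ branchMult ![0, 2, 0, 0] (2, 2) := by decide +kernel
  by_contra! hlam
  obtain hs | hs := Nat.eq_zero_or_pos (lam 0 + lam 2 + lam 3)
  · refine not_isMFRes_of_two_le_branchMult (p := 2) (q := 2) (N := 2) le_rfl le_rfl (by omega)
      (by omega) ?_ h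
    rwa [min_eq_right (by omega : 2 ≤ lam 1), show lam 0 = 0 by omega, show lam 2 = 0 by omega,
      show lam 3 = 0 by omega]
  · refine not_isMFRes_of_two_le_branchMult (p := 1) (q := 1) (N := 1) le_rfl le_rfl (by omega)
      (by omega) ?_ h
    rw [min_eq_right (by omega : 1 ≤ lam 1)]
    exact hmixed _ (min_le_right _ _) _ (min_le_right _ _) _ (min_le_right _ _) (by omega)

lemma sum_min_two_le_two_of_isMFRes (h : IsMFRes .D 4 2 (e 2 1 + e 2 2) lam) (h1 : lam 1 = 0) :
    min (lam 0) 2 + min (lam 2) 2 + min (lam 3) 2 ≤ 2 := by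
  have hmult : ∀ a ≤ 2, ∀ c ≤ 2, ∀ d ≤ 2, 3 ≤ a + c + d →
      2 ≤ branchMult ![a, 0, c, d] (2, 1) := by decide +kernel
  by_contra! hlam
  refine not_isMFRes_of_two_le_branchMult (p := 2) (q := 1) (N := 2) le_rfl one_le_two (by omega)
    (by omega) ?_ h
  rw [h1]
  exact hmult _ (min_le_right _ _) _ (min_le_right _ _) _ (min_le_right _ _) hlam

lemma le_five_of_isMFRes_smul_e {c i : ℕ} (hi : i ∈ ({1, 3, 4} : Finset ℕ))
    (h : IsMFRes .D 4 2 (e 2 1 + e 2 2) (c • e 4 i)) : c ≤ 5 := by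
  have hmult : ∀ i ∈ ({1, 3, 4} : Finset ℕ), 2 ≤ branchMult (6 • e 4 i) (6, 3) := by
    decide +kernel
  by_contra! hc
  have htrunc : ![min ((c • e 4 i) 0) 6, min ((c • e 4 i) 1) 6, min ((c • e 4 i) 2) 6,
      min ((c • e 4 i) 3) 6] = 6 • e 4 i := by
    have hmin : min c 6 = 6 := min_eq_right hc
    fin_cases hi <;> funext k <;> fin_cases k <;> simp [e, hmin]
  have hsum : (c • e 4 i) 0 + (c • e 4 i) 2 + (c • e 4 i) 3 = c := by
    fin_cases hi <;> simp [e]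
  exact not_isMFRes_of_two_le_branchMult (p := 6) (q := 3) (N := 6) le_rfl (by omega) (by omega)
    (by omega) (htrunc ▸ hmult i hi) h

theorem eq_of_isMFRes (h : IsMFRes .D 4 2 (e 2 1 + e 2 2) lam) : lam = e 4 2 ∨
    (∃ i ∈ ({1, 3, 4} : Finset ℕ), ∃ j ∈ ({1, 3, 4} : Finset ℕ), i ≠ j ∧ lam = e 4 i + e 4 j) ∨
    ∃ c ≤ 5, ∃ i ∈ ({1, 3, 4} : Finset ℕ), lam = c • e 4 i := by
  have hmultiple {c i : ℕ} (hi : i ∈ ({1, 3, 4} : Finset ℕ)) (hlam : lam = c • e 4 i) :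
      ∃ c ≤ 5, ∃ i ∈ ({1, 3, 4} : Finset ℕ), lam = c • e 4 i :=
    ⟨c, le_five_of_isMFRes_smul_e hi (hlam ▸ h), i, hi, hlam⟩
  have hlam : lam = lam 0 • e 4 1 + lam 1 • e 4 2 + lam 2 • e 4 3 + lam 3 • e 4 4 := by
    funext k
    fin_cases k <;> simp [e]
  rcases lam_one_eq_zero_or_eq_of_isMFRes h with h1 | ⟨h1, hsum⟩
  · have hmin := sum_min_two_le_two_of_isMFRes h h1
    obtain ⟨h0, h2⟩ | ⟨h0, h3⟩ | ⟨h2, h3⟩ | ⟨h0, h2, h3⟩ | ⟨h0, h2, h3⟩ | ⟨h0, h2, h3⟩ :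
        (lam 0 = 0 ∧ lam 2 = 0) ∨ (lam 0 = 0 ∧ lam 3 = 0) ∨ (lam 2 = 0 ∧ lam 3 = 0) ∨
        (lam 0 = 0 ∧ lam 2 = 1 ∧ lam 3 = 1) ∨ (lam 0 = 1 ∧ lam 2 = 0 ∧ lam 3 = 1) ∨
        (lam 0 = 1 ∧ lam 2 = 1 ∧ lam 3 = 0) := by omega
    · exact .inr (.inr (hmultiple (i := 4) (by decide) (by simpa [h0, h1, h2] using hlam)))
    · exact .inr (.inr (hmultiple (i := 3) (by decide) (by simpa [h0, h1, h3] using hlam)))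
    · exact .inr (.inr (hmultiple (i := 1) (by decide) (by simpa [h1, h2, h3] using hlam)))
    · exact .inr (.inl ⟨3, by decide, 4, by decide, by decide,
        by simpa [h0, h1, h2, h3] using hlam⟩)
    · exact .inr (.inl ⟨1, by decide, 4, by decide, by decide,
        by simpa [h0, h1, h2, h3] using hlam⟩)
    · exact .inr (.inl ⟨1, by decide, 3, by decide, by decide,
        by simpa [h0, h1, h2, h3] using hlam⟩)
  · obtain ⟨h0, h2, h3⟩ : lam 0 = 0 ∧ lam 2 = 0 ∧ lam 3 = 0 := by omega
    exact .inl (by simpa [h0, h1, h2, h3] using hlam)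

end Classification

end MFPaper

/-- **Proposition 5.2.**  Let `X = A₂ < Y = D₄` via the 8-dimensional adjoint
representation `δ = ω₁ + ω₂ = (1,1)`.  Let `lam` be a dominant weight for `Y` with
`lam ∉ {0, λ₁, λ₃, λ₄}`.  Then, up to a twist by an automorphism of `D₄` (triality,
which permutes `λ₁, λ₃, λ₄` and fixes `λ₂`), `V_Y(lam)↓X` is multiplicity-free
if and only if `lam = λ₂`, `λ₁+λ₄`, or `cλ₁` with `1 ≤ c ≤ 5`;
i.e. `V_Y(lam)↓X` is MF iff `lam` lies in the triality orbit of these weights. -/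
theorem thm_A2_in_D4 (lam : Fin 4 → ℕ)
    (hlam0 : lam ≠ 0) (hlam1 : lam ≠ e 4 1) (hlam3 : lam ≠ e 4 3) (hlam4 : lam ≠ e 4 4) :
    IsMFRes CType.D 4 2 (e 2 1 + e 2 2) lam ↔
      (lam = e 4 2
        ∨ (∃ i j : ℕ, (i = 1 ∨ i = 3 ∨ i = 4) ∧ (j = 1 ∨ j = 3 ∨ j = 4) ∧ i ≠ j ∧
            lam = e 4 i + e 4 j)
        ∨ (∃ c i : ℕ, 1 ≤ c ∧ c ≤ 5 ∧ (i = 1 ∨ i = 3 ∨ i = 4) ∧ lam = c • e 4 i)) := by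
  constructor
  · intro h
    obtain h2 | ⟨i, hi, j, hj, hij, hlam⟩ | ⟨c, hc, i, hi, hlam⟩ := eq_of_isMFRes h
    · exact .inl h2
    · exact .inr (.inl ⟨i, j, by simpa using hi, by simpa using hj, hij, hlam⟩)
    · have hc0 : c ≠ 0 := by
        rintro rfl
        exact hlam0 (hlam.trans (zero_smul ..))
      exact .inr (.inr ⟨c, i, Nat.one_le_iff_ne_zero.2 hc0, hc, by simpa using hi, hlam⟩)
  · rintro (rfl | ⟨i, j, hi, hj, hij, rfl⟩ | ⟨c, i, -, hc, hi, rfl⟩)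
    · exact isMFRes_e_two
    · exact isMFRes_e_add_e i (by simpa using hi) j (by simpa using hj) hij
    · exact isMFRes_smul_e c (Finset.mem_range_succ_iff.2 hc) i (by simpa using hi)
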